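/- Assume Σ_{j∈ℤ} r(j)² < ∞. Set θ̂_n := Q_{f_q,n}(Z), θ* := λ_{f_q}(Z) and s_n := √(E[U_{f_q,n}(Z)²]) > 0. Let g : ℝ → ℝ be twice continuously differentiable with g'(θ*) ≠ 0, set θ := g(θ*), and suppose: (i) there is a function φ with d_W( √n (θ̂_n − θ*)/s_n , N ) ≤ φ(n) for all n ≥ 1; (ii) there exist p' > 1 and M > 0 such that E[ ( sup_{x ∈ [min(θ̂_n,θ*), max(θ̂_n,θ*)]} |g''(x)| )^{p'} ] ≤ M for all n ≥ 1. Then there is a constant C > 0 such that for all n ≥ 1: d_W( √n (g(θ̂_n) − θ)/(g'(θ*) s_n) , N ) ≤ C/√n + φ(n), where N is a standard Gaussian random variable. -/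

import Mathlib

open MeasureTheory ProbabilityTheory Filter
open scoped NNReal ENNReal

noncomputable section

variable {Ω : Type*} [MeasureSpace Ω]

/-- `Z` is a centered stationary Gaussian sequence with covariance `r`. -/
def IsCSG (Z : ℤ → Ω → ℝ) (r : ℤ → ℝ) : Prop :=
  (∀ k, Measurable (Z k)) ∧
  (∀ (s : Finset ℤ) (a : ℤ → ℝ), ∃ v : ℝ≥0,
    Measure.map (fun ω => ∑ k ∈ s, a k * Z k ω) (ℙ : Measure Ω) = gaussianReal 0 v) ∧
  (∀ j k : ℤ, ∫ ω, Z j ω * Z k ω = r (k - j)) ∧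
  0 < r 0

/-- `m`-th probabilists' Hermite polynomial, as a function on `ℝ`. -/
def hermiteFun (m : ℕ) (x : ℝ) : ℝ := Polynomial.aeval x (Polynomial.hermite m)

/-- The polynomial `f_q(x) = ∑_{k=0}^{q/2} d_{2k} He_{2k}(x/√r0)`. -/
def fpoly (r0 : ℝ) (d : ℕ → ℝ) (q : ℕ) (x : ℝ) : ℝ :=
  ∑ k ∈ Finset.range (q / 2 + 1), d (2 * k) * hermiteFun (2 * k) (x / Real.sqrt r0)

/-- Polynomial variation `Q_{f,n}(X)`. -/
def Qvar (f : ℝ → ℝ) (X : ℤ → Ω → ℝ) (n : ℕ) (ω : Ω) : ℝ :=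
  (1 / (n : ℝ)) * ∑ i ∈ Finset.range n, f (X (i : ℤ) ω)

/-- `λ_f(X) = E[f(X_0)]`. -/
def lamE (f : ℝ → ℝ) (X : ℤ → Ω → ℝ) : ℝ := ∫ ω, f (X 0 ω)

/-- `U_{f,n}(X) = √n (Q_{f,n}(X) − λ_f(X))`. -/
def Ustat (f : ℝ → ℝ) (X : ℤ → Ω → ℝ) (n : ℕ) (ω : Ω) : ℝ :=
  Real.sqrt n * (Qvar f X n ω - lamE f X)

/-- Variance of `U_{f,n}(X)`. -/
def varU (f : ℝ → ℝ) (X : ℤ → Ω → ℝ) (n : ℕ) : ℝ := ∫ ω, (Ustat f X n ω) ^ 2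

/-- Standardized statistic `F_{f,n}(X)`. -/
def Fstat (f : ℝ → ℝ) (X : ℤ → Ω → ℝ) (n : ℕ) (ω : Ω) : ℝ :=
  Ustat f X n ω / Real.sqrt (varU f X n)

/-- fourth cumulant `κ₄(X) = E[X⁴] − 3 (E[X²])²` of a centered random variable. -/
def kappa4 (X : Ω → ℝ) : ℝ := (∫ ω, X ω ^ 4) - 3 * (∫ ω, X ω ^ 2) ^ 2

/-- third cumulant `κ₃(X) = E[X³]`. -/
def kappa3 (X : Ω → ℝ) : ℝ := ∫ ω, X ω ^ 3

/-- `u_{f_q}(Z) = ∑_{k=1}^{q/2} d_{2k}² (2k)! ∑_{j∈ℤ} (r(j)/r(0))^{2k}`. -/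
def ufq (r : ℤ → ℝ) (d : ℕ → ℝ) (q : ℕ) : ℝ :=
  ∑ k ∈ Finset.Icc 1 (q / 2),
    (d (2 * k)) ^ 2 * (Nat.factorial (2 * k)) * ∑' j : ℤ, (r j / r 0) ^ (2 * k)

/-- Total variation distance between two laws on `ℝ`. -/
def dTV (μ ν : Measure ℝ) : ℝ :=
  ⨆ A : {A : Set ℝ // MeasurableSet A}, |(μ A.1).toReal - (ν A.1).toReal|

/-- Wasserstein distance between two laws on `ℝ`. -/
def dW (μ ν : Measure ℝ) : ℝ :=
  ⨆ f : {f : ℝ → ℝ // LipschitzWith 1 f}, |(∫ x, f.1 x ∂μ) - ∫ x, f.1 x ∂ν|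

/-- The quadratic function `f₂(x) = x²`. -/
def f2 : ℝ → ℝ := fun x => x ^ 2

/-- `U_{f₂,n}(X) = √n (Q_{f₂,n}(X) − r(0))`, quadratic case. -/
def U2 (X : ℤ → Ω → ℝ) (r0 : ℝ) (n : ℕ) (ω : Ω) : ℝ :=
  Real.sqrt n * (Qvar f2 X n ω - r0)

/-- Variance of `U_{f₂,n}`. -/
def varU2 (X : ℤ → Ω → ℝ) (r0 : ℝ) (n : ℕ) : ℝ := ∫ ω, (U2 X r0 n ω) ^ 2

/-- Standardized quadratic statistic `F_{f₂,n}`. -/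
def F2stat (X : ℤ → Ω → ℝ) (r0 : ℝ) (n : ℕ) (ω : Ω) : ℝ :=
  U2 X r0 n ω / Real.sqrt (varU2 X r0 n)

/-- `p`-th order finite difference of a sequence of processes. -/
def fdiff : ℕ → (ℤ → Ω → ℝ) → (ℤ → Ω → ℝ)
  | 0, Z => Z
  | (p + 1), Z => fun k ω => fdiff p Z (k + 1) ω - fdiff p Z k ω

/-!
Write `θ = λ_f(Z)` and let `R` be the remainder of the first-order Taylor expansion of `g` at `θ`.
The two standardized statistics differ by `√n / (g'(θ) s_n) * R(Q_n)`, and `dW` moves by at most the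
`L¹` norm of this difference, so it suffices that `E|R(Q_n)| ≤ K / n`, since `s_n ≥ s_1`.

On `{Q_n ≤ A}` the mean `Q_n` stays in a compact interval, where `|R(t)| ≤ L (t - θ)²`, and
`E[(Q_n - θ)²] = s_n² / n` with `s_n` bounded because the `r(j)²` are summable.

On `{Q_n > A}` one finite expectation controls the growth of `g`: if some `R(Q_m)` is integrable,
comparing the law of `Q_m` far out with `exp(-c t^{1/p}) dt`, where `2 p` is the degree of the
polynomial, gives `∫_A^∞ |R(t)| exp(-c t^{1/p}) dt < ∞`. By summability of `r(j)²` the covariance of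
`(Z_0, …, Z_{n-1})` grows slowly enough that, for large `n`, the law of `Q_n` beyond `A` is at most
`(C / n) exp(-c t^{1/p}) dt`, which settles the large `n`. If no `R(Q_m)` is integrable, all the
distances to be bounded are suprema of unbounded sets, hence `0` by convention.
-/

/-! ### Gaussian vectors -/

section GaussianVector

variable {S T ι κ : Type*} [MeasurableSpace S] [MeasurableSpace T] [Fintype κ]
  {P : Measure S} {P' : Measure T}

lemma hasGaussianLaw_pi_gaussianReal (v : ℝ≥0) :
    HasGaussianLaw (fun ξ i => ξ i) (Measure.pi fun _ : κ => gaussianReal 0 v) := by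
  refine iIndepFun.hasGaussianLaw (fun i => ⟨?_⟩) (iIndepFun_pi fun _ => aemeasurable_id)
  have heval := (measurePreserving_eval (fun _ : κ => gaussianReal 0 v) i).map_eq
  exact (congrArg IsGaussian heval).mpr inferInstance

lemma covariance_eval_pi_gaussianReal [DecidableEq κ] (v : ℝ≥0) (i j : κ) :
    cov[fun ξ => ξ i, fun ξ => ξ j; Measure.pi fun _ : κ => gaussianReal 0 v]
      = if i = j then (v : ℝ) else 0 := by
  split_ifs with hij
  · subst hij
    rw [covariance_self (measurable_pi_apply i).aemeasurable]
    exact ((measurePreserving_eval (fun _ : κ => gaussianReal 0 v) i).variance_fun_comp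
      aemeasurable_id).trans variance_id_gaussianReal
  · exact ((iIndepFun_pi (X := fun (_ : κ) (x : ℝ) => x)
      fun _ => aemeasurable_id).indepFun hij).covariance_eq_zero
        ((hasGaussianLaw_pi_gaussianReal v).eval i).memLp_two
        ((hasGaussianLaw_pi_gaussianReal v).eval j).memLp_two

lemma covariance_mulVec_pi_gaussianReal (v : ℝ≥0) (B : Matrix ι κ ℝ) (i j : ι) :
    cov[fun ξ => B.mulVec ξ i, fun ξ => B.mulVec ξ j; Measure.pi fun _ : κ => gaussianReal 0 v]
      = v * (B * B.transpose) i j := by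
  classical
  have hL2 (i : ι) (k : κ) : MemLp (fun ξ : κ → ℝ => B i k * ξ k) 2
      (Measure.pi fun _ : κ => gaussianReal 0 v) :=
    ((hasGaussianLaw_pi_gaussianReal v).eval k).memLp_two.const_mul _
  simp only [Matrix.mulVec, dotProduct, Matrix.mul_apply, Matrix.transpose_apply]
  rw [covariance_fun_sum_fun_sum (hL2 i) (hL2 j)]
  simp only [covariance_const_mul_left, covariance_const_mul_right,
    covariance_eval_pi_gaussianReal, mul_ite, mul_zero, Finset.sum_ite_eq, Finset.mem_univ,
    if_true, Finset.mul_sum]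
  exact Finset.sum_congr rfl fun k _ => by ring

lemma map_eq_of_hasGaussianLaw [Finite ι] {X : ι → S → ℝ} {Y : ι → T → ℝ}
    (hX : HasGaussianLaw (fun ω i => X i ω) P) (hY : HasGaussianLaw (fun ω i => Y i ω) P')
    (hmean : ∀ i, P[X i] = P'[Y i]) (hcov : ∀ i j, cov[X i, X j; P] = cov[Y i, Y j; P']) :
    P.map (fun ω i => X i ω) = P'.map (fun ω i => Y i ω) := by
  have := Fintype.ofFinite ι
  have := hX.isProbabilityMeasure
  have := hY.isProbabilityMeasure
  have := (hX.toLp_pi 2).isGaussian_map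
  have := (hY.toLp_pi 2).isGaussian_map
  have hE : P.map (fun ω => WithLp.toLp 2 fun i => X i ω)
      = P'.map (fun ω => WithLp.toLp 2 fun i => Y i ω) := by
    refine IsGaussian.ext ?_ ?_
    · rw [integral_map (hX.toLp_pi 2).aemeasurable (by fun_prop),
        integral_map (hY.toLp_pi 2).aemeasurable (by fun_prop)]
      ext i
      have hmeanX := eval_integral_piLp (fun i => (hX.toLp_pi 2).integrable.eval_piLp i) i
      have hmeanY := eval_integral_piLp (fun i => (hY.toLp_pi 2).integrable.eval_piLp i) i
      simp only [id, hmeanX, hmeanY, hmean]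
    · ext x y
      rw [covarianceBilin_apply_pi fun i => (hX.eval i).memLp_two,
        covarianceBilin_apply_pi fun i => (hY.eval i).memLp_two]
      simp only [hcov]
  have h := congrArg (Measure.map (WithLp.ofLp : EuclideanSpace ℝ ι → ι → ℝ)) hE
  rwa [AEMeasurable.map_map_of_aemeasurable (by fun_prop) (hX.toLp_pi 2).aemeasurable,
    AEMeasurable.map_map_of_aemeasurable (by fun_prop) (hY.toLp_pi 2).aemeasurable] at h

lemma map_eq_map_mulVec_pi_gaussianReal [Finite ι] {X : ι → S → ℝ}
    (hX : HasGaussianLaw (fun ω i => X i ω) P) (hmean : ∀ i, P[X i] = 0) {v : ℝ≥0}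
    {B : Matrix ι κ ℝ} (hcov : ∀ i j, cov[X i, X j; P] = v * (B * B.transpose) i j) :
    P.map (fun ω i => X i ω) = (Measure.pi fun _ : κ => gaussianReal 0 v).map B.mulVec := by
  have := Fintype.ofFinite ι
  refine map_eq_of_hasGaussianLaw (Y := fun i ξ => B.mulVec ξ i) hX
    ((hasGaussianLaw_pi_gaussianReal v).map (LinearMap.toContinuousLinearMap B.mulVecLin))
    (fun i => ?_) fun i j => ?_
  · have hint (k : κ) : Integrable (fun ξ : κ → ℝ => B i k * ξ k)
        (Measure.pi fun _ : κ => gaussianReal 0 v) :=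
      ((hasGaussianLaw_pi_gaussianReal v).eval k).integrable.const_mul _
    simp only [hmean, Matrix.mulVec, dotProduct]
    rw [integral_finsetSum _ fun k _ => hint k]
    simp [integral_const_mul, integral_eval]
  · rw [hcov, covariance_mulVec_pi_gaussianReal]

open scoped MatrixOrder in
lemma exists_eq_map_mulVec_pi_gaussianReal [Fintype ι] (μ : Measure (ι → ℝ)) [IsGaussian μ]
    (hmean : ∀ i, ∫ x, x i ∂μ = 0) :
    ∃ B : Matrix ι ι ℝ, μ = (Measure.pi fun _ : ι => gaussianReal 0 1).map B.mulVec := by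
  classical
  have hlaw : HasGaussianLaw (fun x i => x i) μ := IsGaussian.hasGaussianLaw_id
  let T : Matrix ι ι ℝ := Matrix.of fun i j => cov[fun x => x i, fun x => x j; μ]
  have hT : T.PosSemidef := by
    refine Matrix.PosSemidef.of_dotProduct_mulVec_nonneg
      (Matrix.ext fun i j => covariance_comm _ _) fun a => ?_
    refine (variance_nonneg (fun x => ∑ i, a i * x i) μ).trans_eq ?_
    rw [variance_fun_sum fun i => (hlaw.eval i).memLp_two.const_mul _]
    simp only [covariance_const_mul_left, covariance_const_mul_right, dotProduct, Matrix.mulVec,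
      Matrix.of_apply, Finset.mul_sum, Pi.star_apply, star_trivial, T]
    exact Finset.sum_congr rfl fun i _ => Finset.sum_congr rfl fun j _ => by ring
  have hsymm : (CFC.sqrt T).transpose = CFC.sqrt T := by
    simpa [Matrix.IsHermitian] using (Matrix.nonneg_iff_posSemidef.1 (CFC.sqrt_nonneg T)).1
  refine ⟨CFC.sqrt T, Measure.map_id.symm.trans
    (map_eq_map_mulVec_pi_gaussianReal hlaw hmean fun i j => ?_)⟩
  rw [hsymm, CFC.sqrt_mul_sqrt_self T hT.nonneg, NNReal.coe_one, one_mul]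
  rfl

end GaussianVector

/-! ### Dilations of centered Gaussian measures -/

section Dilation

variable {ι : Type*} [Fintype ι]

lemma pi_le_pi {α : ι → Type*} [∀ i, MeasurableSpace (α i)] {μ ν : ∀ i, Measure (α i)}
    (h : ∀ i, μ i ≤ ν i) : Measure.pi μ ≤ Measure.pi ν := by
  refine Measure.le_iff.2 fun s hs => ?_
  rw [Measure.pi_def, Measure.pi_def, toMeasure_apply _ _ hs, toMeasure_apply _ _ hs]
  refine OuterMeasure.le_boundedBy.2 (fun t => (OuterMeasure.boundedBy_le t).trans ?_) s
  exact Finset.prod_le_prod' fun i _ => h i _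

lemma pi_const_smul {α : ι → Type*} [∀ i, MeasurableSpace (α i)] (μ : ∀ i, Measure (α i))
    [∀ i, IsFiniteMeasure (μ i)] (c : ℝ≥0) :
    Measure.pi (fun i => c • μ i) = c ^ Fintype.card ι • Measure.pi μ := by
  refine Measure.pi_eq fun s _ => ?_
  simp only [Measure.smul_apply, ENNReal.smul_def, smul_eq_mul, Measure.pi_pi,
    Finset.prod_mul_distrib, Finset.prod_const, Finset.card_univ, ENNReal.coe_pow]

lemma gaussianReal_le_smul_gaussianReal (m : ℝ) (v : ℝ≥0) {s : ℝ≥0} (hs : 1 ≤ s) :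
    gaussianReal m v ≤ s • gaussianReal m (s ^ 2 * v) := by
  have : s ≠ 0 := (zero_lt_one.trans_le hs).ne'
  rcases eq_or_ne v 0 with rfl | hv
  · rw [mul_zero]
    refine Measure.le_iff.2 fun t _ => le_mul_of_one_le_left (zero_le) ?_
    exact ENNReal.one_le_coe_iff.2 hs
  rw [gaussianReal_of_var_ne_zero _ hv, gaussianReal_of_var_ne_zero _ (by positivity),
    ENNReal.smul_def, ← withDensity_smul _ (measurable_gaussianPDF _ _)]
  refine withDensity_mono (ae_of_all _ fun x => ?_)
  rw [Pi.smul_apply, smul_eq_mul, gaussianPDF, gaussianPDF, ← ENNReal.ofReal_coe_nnreal,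
    ← ENNReal.ofReal_mul s.coe_nonneg]
  refine ENNReal.ofReal_le_ofReal ?_
  have hs1 : (1 : ℝ) ≤ s := hs
  have hv0 : (0 : ℝ) < v := by positivity
  have hexp : -(x - m) ^ 2 / (2 * v) ≤ -(x - m) ^ 2 / (2 * (s ^ 2 * v)) := by
    rw [neg_div, neg_div, neg_le_neg_iff]
    gcongr
    exact le_mul_of_one_le_left hv0.le (one_le_pow₀ hs1)
  calc (√(2 * Real.pi * v))⁻¹ * Real.exp (-(x - m) ^ 2 / (2 * v))
      ≤ (√(2 * Real.pi * v))⁻¹ * Real.exp (-(x - m) ^ 2 / (2 * (s ^ 2 * v))) := by gcongr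
    _ = s * ((√(2 * Real.pi * (s ^ 2 * v : ℝ≥0)))⁻¹
          * Real.exp (-(x - m) ^ 2 / (2 * (s ^ 2 * v : ℝ≥0)))) := by
      have hsqrt : √(2 * Real.pi * (s ^ 2 * v : ℝ≥0)) = s * √(2 * Real.pi * v) := by
        rw [show 2 * Real.pi * ((s ^ 2 * v : ℝ≥0) : ℝ) = s ^ 2 * (2 * Real.pi * v) by
          push_cast; ring, Real.sqrt_mul (sq_nonneg _), Real.sqrt_sq s.coe_nonneg]
      rw [hsqrt, mul_inv]
      push_cast
      field_simp

lemma pi_gaussianReal_le_smul_map (v : ℝ≥0) {s : ℝ≥0} (hs : 1 ≤ s) :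
    Measure.pi (fun _ : ι => gaussianReal 0 v)
      ≤ s ^ Fintype.card ι • (Measure.pi fun _ : ι => gaussianReal 0 v).map (s • ·) := by
  have hmap : (gaussianReal 0 v).map ((s : ℝ) * ·) = gaussianReal 0 (s ^ 2 * v) := by
    rw [gaussianReal_map_const_mul, mul_zero]
    rfl
  have hpi : (Measure.pi fun _ : ι => gaussianReal 0 v).map (s • ·)
      = Measure.pi fun _ : ι => gaussianReal 0 (s ^ 2 * v) := by
    have hs' (_ : ι) : AEMeasurable ((s : ℝ) * ·) (gaussianReal 0 v) := by fun_prop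
    have (_ : ι) : SigmaFinite ((gaussianReal 0 v).map ((s : ℝ) * ·)) := hmap ▸ inferInstance
    exact (Measure.pi_map_pi hs').trans (by rw [hmap])
  rw [hpi, ← pi_const_smul]
  exact pi_le_pi fun _ => gaussianReal_le_smul_gaussianReal 0 v hs

lemma le_smul_map_smul_of_isGaussian (μ : Measure (ι → ℝ)) [IsGaussian μ]
    (hmean : ∀ i, ∫ x, x i ∂μ = 0) {s : ℝ≥0} (hs : 1 ≤ s) :
    μ ≤ s ^ Fintype.card ι • μ.map (s • ·) := by
  obtain ⟨B, hB⟩ := exists_eq_map_mulVec_pi_gaussianReal μ hmean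
  have hBm : Measurable B.mulVec := (Matrix.mulVecLin B).continuous_of_finiteDimensional.measurable
  have hcomm : B.mulVec ∘ (s • ·) = (s • ·) ∘ B.mulVec := funext fun ξ => B.mulVec_smul s ξ
  calc μ = (Measure.pi fun _ : ι => gaussianReal 0 1).map B.mulVec := hB
    _ ≤ (s ^ Fintype.card ι • (Measure.pi fun _ : ι => gaussianReal 0 1).map (s • ·)).map
          B.mulVec := Measure.map_mono (pi_gaussianReal_le_smul_map 1 hs) hBm
    _ = s ^ Fintype.card ι • μ.map (s • ·) := by
      rw [Measure.map_smul, Measure.map_map hBm (measurable_const_smul s), hcomm,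
        ← Measure.map_map (measurable_const_smul s) hBm, ← hB]

end Dilation

/-! ### Covariances of even functions of Gaussian variables -/

section Taylor

lemma abs_sub_sub_deriv_mul_le {f : ℝ → ℝ} (hf : ContDiff ℝ 2 f) {x y K : ℝ}
    (hK : ∀ t ∈ Set.uIcc x y, |deriv (deriv f) t| ≤ K) :
    |f y - f x - deriv f x * (y - x)| ≤ K * (y - x) ^ 2 := by
  have hf' : ContDiff ℝ 1 (deriv f) := hf.deriv'
  have hdiff : Differentiable ℝ f := hf.differentiable two_ne_zero
  have hK0 : 0 ≤ K := (abs_nonneg _).trans (hK x Set.left_mem_uIcc)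
  have hderiv : ∀ t ∈ Set.uIcc x y, |deriv f t - deriv f x| ≤ K * |y - x| := fun t ht =>
    (((convex_uIcc x y).norm_image_sub_le_of_norm_deriv_le
      (fun _ _ => hf'.differentiable one_ne_zero _) hK Set.left_mem_uIcc ht)).trans
        (mul_le_mul_of_nonneg_left (Set.abs_sub_left_of_mem_uIcc ht) hK0)
  have hlin (t : ℝ) : HasDerivAt (fun t => f t - deriv f x * t) (deriv f t - deriv f x) t := by
    simpa using (hdiff t).hasDerivAt.fun_sub ((hasDerivAt_id t).const_mul (deriv f x))
  have := (convex_uIcc x y).norm_image_sub_le_of_norm_hasDerivWithin_le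
    (fun t _ => (hlin t).hasDerivWithinAt) hderiv Set.left_mem_uIcc Set.right_mem_uIcc
  rw [Real.norm_eq_abs, Real.norm_eq_abs, mul_assoc, abs_mul_abs_self] at this
  convert this using 2 <;> ring

lemma abs_second_difference_le {f : ℝ → ℝ} (hf : ContDiff ℝ 2 f) {x h K : ℝ}
    (hK : ∀ t, |t - x| ≤ |h| → |deriv (deriv f) t| ≤ K) :
    |f (x + h) + f (x - h) - 2 * f x| ≤ 2 * K * h ^ 2 := by
  have hpos := abs_sub_sub_deriv_mul_le hf (x := x) (y := x + h) fun t ht =>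
    hK t ((Set.abs_sub_left_of_mem_uIcc ht).trans_eq (by ring_nf))
  have hneg := abs_sub_sub_deriv_mul_le hf (x := x) (y := x - h) fun t ht =>
    hK t ((Set.abs_sub_left_of_mem_uIcc ht).trans_eq (by rw [sub_sub_cancel_left, abs_neg]))
  rw [abs_le] at *
  constructor <;> nlinarith

end Taylor

section Mehler

variable {S : Type*} [MeasurableSpace S] {P : Measure S} {f : ℝ → ℝ} {v : ℝ≥0} {ρ K : ℝ} {N : ℕ}

lemma integrable_one_add_sq_pow {Y : S → ℝ} (hY : HasGaussianLaw Y P) (N : ℕ) :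
    Integrable (fun ω => (1 + Y ω ^ 2) ^ N) P := by
  have := hY.isProbabilityMeasure
  simp only [add_comm (1 : ℝ), add_pow, one_pow, mul_one, ← pow_mul]
  refine integrable_finsetSum _ fun k _ => Integrable.mul_const ?_ _
  simpa [(even_two_mul k).pow_abs] using
    (hY.memLp (ENNReal.natCast_ne_top (2 * k))).integrable_norm_pow'

lemma memLp_two_comp_of_hasGaussianLaw {Y : S → ℝ} (hY : HasGaussianLaw Y P) (hf : Measurable f)
    (hfK : ∀ x, |f x| ≤ K * (1 + x ^ 2) ^ N) : MemLp (fun ω => f (Y ω)) 2 P := by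
  have hmeas := (hf.comp_aemeasurable hY.aemeasurable).aestronglyMeasurable
  refine (memLp_two_iff_integrable_sq hmeas).2
    (((integrable_one_add_sq_pow hY (N * 2)).const_mul (K ^ 2)).mono' (hmeas.pow 2)
      (ae_of_all _ fun ω => ?_))
  rw [Real.norm_eq_abs, abs_pow, pow_mul, ← mul_pow]
  exact pow_le_pow_left₀ (abs_nonneg _) (hfK _) 2

lemma integrable_one_add_sq_pow_gaussianReal (v : ℝ≥0) (N : ℕ) :
    Integrable (fun x : ℝ => (1 + x ^ 2) ^ N) (gaussianReal 0 v) :=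
  integrable_one_add_sq_pow IsGaussian.hasGaussianLaw_id N

/-- The Ornstein–Uhlenbeck semigroup on functions of a centered Gaussian variable of variance `v`,
given by Mehler's formula at the time `t` with `exp (-2 * t) = ρ`. It factors the covariance of two
functions of correlated Gaussian variables. -/
def mehler (v : ℝ≥0) (ρ : ℝ) (f : ℝ → ℝ) (x : ℝ) : ℝ :=
  ∫ y, f (√ρ * x + √(1 - ρ) * y) ∂(gaussianReal 0 v)

lemma one_add_sq_mehler_arg_le (hρ : ρ ∈ Set.Icc (0 : ℝ) 1) (x y : ℝ) :
    1 + (√ρ * x + √(1 - ρ) * y) ^ 2 ≤ (1 + x ^ 2) * (1 + y ^ 2) := by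
  have h1 := Real.sq_sqrt hρ.1
  have h2 := Real.sq_sqrt (sub_nonneg.2 hρ.2)
  nlinarith [sq_nonneg (√(1 - ρ) * x - √ρ * y), mul_nonneg (sq_nonneg x) (sq_nonneg y)]

lemma abs_mehler_arg_le (hρ : ρ ∈ Set.Icc (0 : ℝ) 1) (hK : 0 ≤ K)
    (hf : ∀ x, |f x| ≤ K * (1 + x ^ 2) ^ N) (x y : ℝ) :
    |f (√ρ * x + √(1 - ρ) * y)| ≤ K * (1 + x ^ 2) ^ N * (1 + y ^ 2) ^ N :=
  calc |f (√ρ * x + √(1 - ρ) * y)| ≤ K * (1 + (√ρ * x + √(1 - ρ) * y) ^ 2) ^ N := hf _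
    _ ≤ K * ((1 + x ^ 2) * (1 + y ^ 2)) ^ N := by
      gcongr
      exact one_add_sq_mehler_arg_le hρ x y
    _ = K * (1 + x ^ 2) ^ N * (1 + y ^ 2) ^ N := by rw [mul_pow, mul_assoc]

lemma integrable_mehler_arg (hfm : Measurable f) (hρ : ρ ∈ Set.Icc (0 : ℝ) 1) (hK : 0 ≤ K)
    (hf : ∀ x, |f x| ≤ K * (1 + x ^ 2) ^ N) (x : ℝ) :
    Integrable (fun y => f (√ρ * x + √(1 - ρ) * y)) (gaussianReal 0 v) :=
  ((integrable_one_add_sq_pow_gaussianReal v N).const_mul (K * (1 + x ^ 2) ^ N)).mono'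
    (hfm.comp (by fun_prop)).aestronglyMeasurable
    (ae_of_all _ fun y => abs_mehler_arg_le hρ hK hf x y)

lemma measurable_mehler (hfm : Measurable f) : Measurable (mehler v ρ f) :=
  (StronglyMeasurable.integral_prod_right' (ν := gaussianReal 0 v)
    (f := fun p : ℝ × ℝ => f (√ρ * p.1 + √(1 - ρ) * p.2))
    (hfm.comp (by fun_prop)).stronglyMeasurable).measurable

lemma abs_mehler_le (hρ : ρ ∈ Set.Icc (0 : ℝ) 1) (hK : 0 ≤ K)
    (hf : ∀ x, |f x| ≤ K * (1 + x ^ 2) ^ N) (x : ℝ) :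
    |mehler v ρ f x| ≤ K * (∫ y, (1 + y ^ 2) ^ N ∂(gaussianReal 0 v)) * (1 + x ^ 2) ^ N := by
  refine (norm_integral_le_of_norm_le (f := fun y => f (√ρ * x + √(1 - ρ) * y))
    ((integrable_one_add_sq_pow_gaussianReal v N).const_mul (K * (1 + x ^ 2) ^ N))
    (ae_of_all _ fun y => abs_mehler_arg_le hρ hK hf x y)).trans_eq ?_
  rw [integral_const_mul]
  ring

lemma integral_comp_neg_gaussianReal (g : ℝ → ℝ) :
    ∫ y, g (-y) ∂(gaussianReal 0 v) = ∫ y, g y ∂(gaussianReal 0 v) := by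
  have hmp : MeasurePreserving (MeasurableEquiv.neg ℝ) (gaussianReal 0 v) (gaussianReal 0 v) :=
    ⟨measurable_neg, by simpa using gaussianReal_map_neg (μ := 0) (v := v)⟩
  exact hmp.integral_comp' g

lemma abs_mehler_arg_second_difference_le (hfc : ContDiff ℝ 2 f) (hρ : ρ ∈ Set.Icc (0 : ℝ) 1)
    (hK : 0 ≤ K) (hf'' : ∀ x, |deriv (deriv f) x| ≤ K * (1 + x ^ 2) ^ N) (x y : ℝ) :
    |f (√ρ * x + √(1 - ρ) * y) + f (√ρ * -x + √(1 - ρ) * y) - 2 * f (√ρ * 0 + √(1 - ρ) * y)|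
      ≤ 2 * (K * ((1 + x ^ 2) * (1 + y ^ 2)) ^ N) * (√ρ * x) ^ 2 := by
  have h := abs_second_difference_le hfc (x := √(1 - ρ) * y) (h := √ρ * x)
    (K := K * ((1 + x ^ 2) * (1 + y ^ 2)) ^ N) fun t ht => (hf'' t).trans ?_
  · convert h using 1
    ring_nf
  gcongr
  refine le_trans ?_ ((one_add_sq_mehler_arg_le hρ |x| |y|).trans_eq (by simp only [sq_abs]))
  have habs : |t| ≤ √ρ * |x| + √(1 - ρ) * |y| := by
    have := (abs_sub_abs_le_abs_sub _ _).trans ht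
    simp only [abs_mul, abs_of_nonneg (Real.sqrt_nonneg _)] at this
    linarith
  rw [← sq_abs t]
  gcongr

/-- `f` is an even `C²` function bounded, along with its second derivative, by
`K * (1 + x ^ 2) ^ N`. Covariances of such functions of Gaussian variables are quadratic in the
covariances of the variables. -/
structure EvenWithGrowth (f : ℝ → ℝ) (K : ℝ) (N : ℕ) : Prop where
  contDiff : ContDiff ℝ 2 f
  even (x : ℝ) : f (-x) = f x
  nonneg : 0 ≤ K
  abs_le (x : ℝ) : |f x| ≤ K * (1 + x ^ 2) ^ N
  abs_deriv_deriv_le (x : ℝ) : |deriv (deriv f) x| ≤ K * (1 + x ^ 2) ^ N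

-- Since `f` is even, `mehler v ρ f x` is also an average of `f` at `√(1 - ρ) * y - √ρ * x`. The
-- resulting second difference of step `√ρ * x` gains the factor `ρ` instead of `√ρ`.
lemma abs_mehler_sub_mehler_zero_le (hf : EvenWithGrowth f K N)
    (hρ : ρ ∈ Set.Icc (0 : ℝ) 1) (x : ℝ) :
    |mehler v ρ f x - mehler v ρ f 0|
      ≤ ρ * (K * (∫ y, (1 + y ^ 2) ^ N ∂(gaussianReal 0 v)) * (1 + x ^ 2) ^ (N + 1)) := by
  have hflip : mehler v ρ f x = ∫ y, f (√ρ * -x + √(1 - ρ) * y) ∂(gaussianReal 0 v) := by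
    rw [mehler, ← integral_comp_neg_gaussianReal]
    refine integral_congr_ae (ae_of_all _ fun y => ?_)
    dsimp only
    rw [← hf.even]
    ring_nf
  have hint := integrable_mehler_arg (v := v) hf.contDiff.continuous.measurable hρ hf.nonneg
    hf.abs_le
  have hsecond : 2 * (mehler v ρ f x - mehler v ρ f 0)
      = ∫ y, (f (√ρ * x + √(1 - ρ) * y) + f (√ρ * -x + √(1 - ρ) * y)
          - 2 * f (√ρ * 0 + √(1 - ρ) * y)) ∂(gaussianReal 0 v) := by
    rw [integral_sub ((hint x).fun_add (hint (-x))) ((hint 0).const_mul 2),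
      integral_add (hint x) (hint (-x)), integral_const_mul, ← hflip]
    simp only [mehler]
    ring
  have hbound : |2 * (mehler v ρ f x - mehler v ρ f 0)|
      ≤ 2 * (K * (1 + x ^ 2) ^ N) * (√ρ * x) ^ 2 * ∫ y, (1 + y ^ 2) ^ N ∂(gaussianReal 0 v) := by
    rw [hsecond, ← integral_const_mul, ← Real.norm_eq_abs]
    refine norm_integral_le_of_norm_le ((integrable_one_add_sq_pow_gaussianReal v N).const_mul _)
      (ae_of_all _ fun y => ?_)
    refine (abs_mehler_arg_second_difference_le hf.contDiff hρ hf.nonneg hf.abs_deriv_deriv_le x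
      y).trans_eq ?_
    rw [mul_pow]
    ring
  rw [abs_mul, abs_two, mul_pow, Real.sq_sqrt hρ.1] at hbound
  set I := ∫ y, (1 + y ^ 2) ^ N ∂(gaussianReal 0 v)
  have : 0 ≤ I := integral_nonneg fun y => by positivity
  calc |mehler v ρ f x - mehler v ρ f 0| ≤ ρ * (K * I * ((1 + x ^ 2) ^ N * x ^ 2)) := by linarith
    _ ≤ ρ * (K * I * (1 + x ^ 2) ^ (N + 1)) := by
      have := hρ.1
      have := hf.nonneg
      rw [pow_succ _ N]
      gcongr
      exact le_add_of_nonneg_left zero_le_one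

/-- The constant `C` in the bound `Var[mehler v ρ f] ≤ C * ρ ^ 2` for functions `f` whose second
derivative is at most `K * (1 + x ^ 2) ^ N`. -/
def mehlerConst (v : ℝ≥0) (K : ℝ) (N : ℕ) : ℝ :=
  ∫ x, (K * (∫ y, (1 + y ^ 2) ^ N ∂(gaussianReal 0 v)) * (1 + x ^ 2) ^ (N + 1)) ^ 2
    ∂(gaussianReal 0 v)

lemma variance_mehler_le (hf : EvenWithGrowth f K N)
    (hρ : ρ ∈ Set.Icc (0 : ℝ) 1) :
    Var[mehler v ρ f; gaussianReal 0 v] ≤ mehlerConst v K N * ρ ^ 2 := by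
  have hm := measurable_mehler (v := v) (ρ := ρ) hf.contDiff.continuous.measurable
  rw [← variance_sub_const hm.aestronglyMeasurable (mehler v ρ f 0), mehlerConst,
    ← integral_mul_const]
  refine (variance_le_expectation_sq (by fun_prop)).trans
    (integral_mono_of_nonneg (ae_of_all _ fun x => sq_nonneg _) ?_ (ae_of_all _ fun x => ?_))
  · simp only [mul_pow, ← pow_mul]
    exact ((integrable_one_add_sq_pow_gaussianReal v _).const_mul _).mul_const _
  · simp only [Pi.pow_apply, ← mul_pow]
    rw [mul_comm]
    exact sq_le_sq.2 ((abs_mehler_sub_mehler_zero_le hf hρ x).trans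
      (le_abs_self _))

lemma map_pi_fin_three (ν : Measure ℝ) [SigmaFinite ν] :
    (Measure.pi fun _ : Fin 3 => ν).map (fun ξ => (ξ 0, ξ 1, ξ 2)) = ν.prod (ν.prod ν) :=
  (((MeasurePreserving.id ν).prod (measurePreserving_piFinTwo fun _ => ν)).comp
    (measurePreserving_piFinSuccAbove (fun _ => ν) 0)).map_eq

lemma integral_pi_fin_three_mul {ν : Measure ℝ} [SigmaFinite ν] {u w : ℝ → ℝ → ℝ}
    (hint : Integrable (fun x : ℝ × ℝ × ℝ => u x.1 x.2.1 * w x.1 x.2.2) (ν.prod (ν.prod ν))) :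
    ∫ ξ, u (ξ 0) (ξ 1) * w (ξ 0) (ξ 2) ∂(Measure.pi fun _ : Fin 3 => ν)
      = ∫ a, (∫ b, u a b ∂ν) * ∫ c, w a c ∂ν ∂ν := by
  rw [← map_pi_fin_three] at hint
  have h := integral_map (φ := fun ξ : Fin 3 → ℝ => (ξ 0, ξ 1, ξ 2)) (by fun_prop)
    hint.aestronglyMeasurable
  rw [← h]
  rw [map_pi_fin_three] at hint ⊢
  rw [integral_prod _ hint]
  exact integral_congr_ae (ae_of_all _ fun a => integral_prod_mul (u a) (w a))

variable {X : Fin 2 → S → ℝ}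

/-- The linear map sending three independent variables of variance `v` to a pair of variables of
variance `v` with covariance `ε * ρ * v`, where `ε = 1` or `ε = -1`; the first variable is the
common part of the pair. -/
def mehlerMatrix (ρ ε : ℝ) : Matrix (Fin 2) (Fin 3) ℝ :=
  !![√ρ, √(1 - ρ), 0; ε * √ρ, 0, ε * √(1 - ρ)]

lemma mehlerMatrix_mul_transpose {ε : ℝ} (hε : ε * ε = 1) (hρ : ρ ∈ Set.Icc (0 : ℝ) 1) :
    mehlerMatrix ρ ε * (mehlerMatrix ρ ε).transpose = !![1, ε * ρ; ε * ρ, 1] := by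
  have h1 := Real.mul_self_sqrt hρ.1
  have h2 := Real.mul_self_sqrt (sub_nonneg.2 hρ.2)
  ext i j
  fin_cases i <;> fin_cases j <;>
    simp only [mehlerMatrix, Matrix.mul_apply, Fin.sum_univ_three, Matrix.transpose_apply] <;>
    simp
  · linear_combination h1 + h2
  · linear_combination ε * h1
  · linear_combination ε * h1
  · linear_combination (√ρ * √ρ + √(1 - ρ) * √(1 - ρ)) * hε + h1 + h2

lemma map_eq_map_mehlerMatrix {ε : ℝ} (hε : ε * ε = 1) (hρ : ρ ∈ Set.Icc (0 : ℝ) 1)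
    (hX : HasGaussianLaw (fun ω i => X i ω) P) (hmean : ∀ i, P[X i] = 0)
    (hvar : ∀ i, Var[X i; P] = v) (hcov : cov[X 0, X 1; P] = ε * ρ * v) :
    P.map (fun ω i => X i ω)
      = (Measure.pi fun _ : Fin 3 => gaussianReal 0 v).map (mehlerMatrix ρ ε).mulVec := by
  refine map_eq_map_mulVec_pi_gaussianReal hX hmean fun i j => ?_
  have hself (i : Fin 2) : cov[X i, X i; P] = v :=
    (covariance_self (hX.eval i).aemeasurable).trans (hvar i)
  rw [mehlerMatrix_mul_transpose hε hρ]
  fin_cases i <;> fin_cases j <;> simp [hself, covariance_comm (X 1), hcov, mul_comm]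

lemma integral_mul_comp_eq_integral_mehler_mul {f g : ℝ → ℝ} {ε : ℝ} {N' : ℕ} {K' : ℝ}
    (hε : ε = 1 ∨ ε = -1) (hρ : ρ ∈ Set.Icc (0 : ℝ) 1) (hX : HasGaussianLaw (fun ω i => X i ω) P)
    (hmean : ∀ i, P[X i] = 0) (hvar : ∀ i, Var[X i; P] = v) (hcov : cov[X 0, X 1; P] = ε * ρ * v)
    (hf : Measurable f) (hg : Measurable g) (heven : ∀ x, g (-x) = g x) (hK : 0 ≤ K) (hK' : 0 ≤ K')
    (hfK : ∀ x, |f x| ≤ K * (1 + x ^ 2) ^ N) (hgK : ∀ x, |g x| ≤ K' * (1 + x ^ 2) ^ N') :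
    ∫ ω, f (X 0 ω) * g (X 1 ω) ∂P = ∫ x, mehler v ρ f x * mehler v ρ g x ∂(gaussianReal 0 v) := by
  have hε2 : ε * ε = 1 := by rcases hε with rfl | rfl <;> norm_num
  have hgε (x : ℝ) : g (ε * x) = g x := by rcases hε with rfl | rfl <;> simp [heven]
  have hB : Measurable (mehlerMatrix ρ ε).mulVec :=
    (mehlerMatrix ρ ε).mulVecLin.continuous_of_finiteDimensional.measurable
  have hfg : Measurable fun x : Fin 2 → ℝ => f (x 0) * g (x 1) :=
    (hf.comp (measurable_pi_apply 0)).mul (hg.comp (measurable_pi_apply 1))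
  have hint : Integrable (fun x : ℝ × ℝ × ℝ => f (√ρ * x.1 + √(1 - ρ) * x.2.1)
      * g (√ρ * x.1 + √(1 - ρ) * x.2.2))
      ((gaussianReal 0 v).prod ((gaussianReal 0 v).prod (gaussianReal 0 v))) := by
    have hγ := integrable_one_add_sq_pow_gaussianReal v
    refine (((hγ (N + N')).mul_prod ((hγ N).mul_prod (hγ N'))).const_mul (K * K')).mono'
      ((hf.comp (by fun_prop)).mul (hg.comp (by fun_prop))).aestronglyMeasurable
      (ae_of_all _ fun x => ?_)
    rw [norm_mul]
    refine (mul_le_mul (abs_mehler_arg_le hρ hK hfK x.1 x.2.1)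
      (abs_mehler_arg_le hρ hK' hgK x.1 x.2.2) (abs_nonneg _) (by positivity)).trans_eq ?_
    ring
  calc ∫ ω, f (X 0 ω) * g (X 1 ω) ∂P
      = ∫ x, f (x 0) * g (x 1) ∂(P.map fun ω i => X i ω) :=
        (integral_map hX.aemeasurable hfg.aestronglyMeasurable).symm
    _ = ∫ ξ, f (√ρ * ξ 0 + √(1 - ρ) * ξ 1) * g (√ρ * ξ 0 + √(1 - ρ) * ξ 2)
          ∂(Measure.pi fun _ : Fin 3 => gaussianReal 0 v) := by
      rw [map_eq_map_mehlerMatrix hε2 hρ hX hmean hvar hcov,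
        integral_map hB.aemeasurable hfg.aestronglyMeasurable]
      refine integral_congr_ae (ae_of_all _ fun ξ => ?_)
      dsimp only
      rw [← hgε (√ρ * ξ 0 + √(1 - ρ) * ξ 2)]
      simp [mehlerMatrix, Matrix.mulVec, dotProduct, Fin.sum_univ_three, mul_add, mul_assoc]
    _ = ∫ x, mehler v ρ f x * mehler v ρ g x ∂(gaussianReal 0 v) :=
      integral_pi_fin_three_mul (u := fun a b => f (√ρ * a + √(1 - ρ) * b))
        (w := fun a c => g (√ρ * a + √(1 - ρ) * c)) hint

lemma covariance_comp_eq_variance_mehler {ε : ℝ} (hε : ε = 1 ∨ ε = -1)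
    (hρ : ρ ∈ Set.Icc (0 : ℝ) 1) (hX : HasGaussianLaw (fun ω i => X i ω) P)
    (hmean : ∀ i, P[X i] = 0) (hvar : ∀ i, Var[X i; P] = v) (hcov : cov[X 0, X 1; P] = ε * ρ * v)
    (hf : Measurable f) (heven : ∀ x, f (-x) = f x) (hK : 0 ≤ K)
    (hfK : ∀ x, |f x| ≤ K * (1 + x ^ 2) ^ N) :
    cov[fun ω => f (X 0 ω), fun ω => f (X 1 ω); P] = Var[mehler v ρ f; gaussianReal 0 v] := by
  have := hX.isProbabilityMeasure
  have hone (x : ℝ) : mehler v ρ (fun _ => 1) x = 1 := by simp [mehler]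
  have hL2 (i : Fin 2) : MemLp (fun ω => f (X i ω)) 2 P :=
    memLp_two_comp_of_hasGaussianLaw (hX.eval i) hf hfK
  have hM : MemLp (mehler v ρ f) 2 (gaussianReal 0 v) := memLp_two_comp_of_hasGaussianLaw
    IsGaussian.hasGaussianLaw_id (measurable_mehler hf) (abs_mehler_le hρ hK hfK)
  rw [covariance_eq_sub (hL2 0) (hL2 1), variance_eq_sub hM]
  have hmul := integral_mul_comp_eq_integral_mehler_mul hε hρ hX hmean hvar hcov hf hf heven hK hK
    hfK hfK
  have h0 := integral_mul_comp_eq_integral_mehler_mul (g := fun _ => 1) (N' := 0) (K' := 1) hε hρ hX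
    hmean hvar hcov hf measurable_const (fun _ => rfl) hK zero_le_one hfK (by simp)
  have h1 := integral_mul_comp_eq_integral_mehler_mul (f := fun _ => 1) (N := 0) (K := 1) hε hρ hX
    hmean hvar hcov measurable_const hf heven zero_le_one hK (by simp) hfK
  simp only [hone, mul_one, one_mul] at h0 h1
  simp only [Pi.mul_apply, Pi.pow_apply, hmul, h0, h1, sq]

lemma abs_covariance_le {U V : S → ℝ} [IsFiniteMeasure P] (hU : MemLp U 2 P) (hV : MemLp V 2 P) :
    |cov[U, V; P]| ≤ (Var[U; P] + Var[V; P]) / 2 := by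
  have hadd := variance_add hU hV
  have hsub := variance_sub hU hV
  rw [abs_le]
  constructor <;> linarith [variance_nonneg (U + V) P, variance_nonneg (U - V) P]

lemma covariance_comp_mem_Icc (hf : EvenWithGrowth f K N) (hv : v ≠ 0)
    (hX : HasGaussianLaw (fun ω i => X i ω) P) (hmean : ∀ i, P[X i] = 0)
    (hvar : ∀ i, Var[X i; P] = v) :
    cov[fun ω => f (X 0 ω), fun ω => f (X 1 ω); P]
      ∈ Set.Icc 0 (mehlerConst v K N / v ^ 2 * cov[X 0, X 1; P] ^ 2) := by
  have := hX.isProbabilityMeasure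
  have hv0 : (0 : ℝ) < v := by positivity
  have hle : |cov[X 0, X 1; P]| ≤ v := by
    simpa [hvar] using abs_covariance_le (hX.eval 0).memLp_two (hX.eval 1).memLp_two
  have hρ : |cov[X 0, X 1; P]| / v ∈ Set.Icc (0 : ℝ) 1 :=
    ⟨by positivity, (div_le_one hv0).2 hle⟩
  obtain ⟨ε, hε, hcov⟩ : ∃ ε : ℝ, (ε = 1 ∨ ε = -1) ∧
      cov[X 0, X 1; P] = ε * (|cov[X 0, X 1; P]| / v) * v := by
    rcases abs_choice cov[X 0, X 1; P] with h | h
    · exact ⟨1, Or.inl rfl, by rw [h]; field_simp⟩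
    · exact ⟨-1, Or.inr rfl, by rw [h]; field_simp⟩
  rw [covariance_comp_eq_variance_mehler hε hρ hX hmean hvar hcov
    hf.contDiff.continuous.measurable hf.even hf.nonneg hf.abs_le]
  refine ⟨variance_nonneg _ _, (variance_mehler_le hf hρ).trans_eq ?_⟩
  rw [div_pow, sq_abs]
  ring

end Mehler

/-! ### Empirical means of a stationary Gaussian sequence -/

section EvenPolynomial

open Polynomial

lemma exists_abs_eval_le (Q : ℝ[X]) {N : ℕ} (hN : Q.natDegree ≤ N) :
    ∃ K ≥ 0, ∀ x, |Q.eval x| ≤ K * (1 + x ^ 2) ^ N := by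
  refine ⟨∑ k ∈ Finset.range (Q.natDegree + 1), |Q.coeff k|,
    Finset.sum_nonneg fun _ _ => abs_nonneg _, fun x => ?_⟩
  rw [eval_eq_sum_range, Finset.sum_mul]
  refine (Finset.abs_sum_le_sum_abs _ _).trans (Finset.sum_le_sum fun k hk => ?_)
  have hone : 1 ≤ 1 + x ^ 2 := le_add_of_nonneg_right (sq_nonneg x)
  have hx : |x| ≤ 1 + x ^ 2 := by nlinarith [sq_abs x, sq_nonneg (|x| - 1)]
  rw [abs_mul, abs_pow]
  gcongr
  exact (pow_le_pow_left₀ (abs_nonneg x) hx k).trans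
    (pow_le_pow_right₀ hone ((Nat.lt_succ_iff.1 (Finset.mem_range.1 hk)).trans hN))

lemma exists_evenWithGrowth_eval {Q : ℝ[X]} (heven : ∀ x, Q.eval (-x) = Q.eval x) :
    ∃ K N, EvenWithGrowth Q.eval K N := by
  have hderiv : deriv (deriv fun x => Q.eval x) = fun x => Q.derivative.derivative.eval x := by
    rw [show deriv (fun x => Q.eval x) = fun x => Q.derivative.eval x from funext fun _ => Q.deriv]
    exact funext fun _ => Q.derivative.deriv
  obtain ⟨K, hK0, hK⟩ := exists_abs_eval_le Q le_rfl
  obtain ⟨K', hK0', hK'⟩ := exists_abs_eval_le Q.derivative.derivative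
    (natDegree_iterate_derivative Q 2 |>.trans (Nat.sub_le _ _))
  refine ⟨K + K', Q.natDegree, Q.contDiff_aeval 2, heven, add_nonneg hK0 hK0',
    fun x => (hK x).trans ?_, fun x => ?_⟩
  · gcongr
    exact le_add_of_nonneg_right hK0'
  · rw [hderiv]
    refine (hK' x).trans ?_
    gcongr
    exact le_add_of_nonneg_left hK0

end EvenPolynomial

namespace IsCSG

variable {Z : ℤ → Ω → ℝ} {r : ℤ → ℝ} {f : ℝ → ℝ} {K : ℝ} {N : ℕ}

lemma exists_map_sum_eq_gaussianReal (hZ : IsCSG Z r) {ι : Type*} [Fintype ι] (k : ι → ℤ)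
    (a : ι → ℝ) :
    ∃ v : ℝ≥0, (ℙ : Measure Ω).map (fun ω => ∑ i, a i * Z (k i) ω) = gaussianReal 0 v := by
  classical
  obtain ⟨v, hv⟩ := hZ.2.1 (Finset.univ.image k) fun m => ∑ i with k i = m, a i
  refine ⟨v, ?_⟩
  rw [← hv]
  congr 1
  ext ω
  rw [← Finset.sum_fiberwise_of_maps_to (fun i _ => Finset.mem_image_of_mem k (Finset.mem_univ i))]
  refine Finset.sum_congr rfl fun m _ => ?_
  rw [Finset.sum_mul]
  exact Finset.sum_congr rfl fun i hi => by rw [(Finset.mem_filter.1 hi).2]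

lemma hasGaussianLaw_pi (hZ : IsCSG Z r) {ι : Type*} [Finite ι] (k : ι → ℤ) :
    HasGaussianLaw (fun ω i => Z (k i) ω) (ℙ : Measure Ω) := by
  classical
  have := Fintype.ofFinite ι
  have hmeas : Measurable fun ω i => Z (k i) ω := measurable_pi_lambda _ fun i => hZ.1 (k i)
  refine ⟨isGaussian_of_map_eq_gaussianReal fun L => ?_⟩
  obtain ⟨v, hv⟩ := hZ.exists_map_sum_eq_gaussianReal k fun i => L (Pi.single i 1)
  refine ⟨0, v, ?_⟩
  rw [← hv, Measure.map_map (by fun_prop) hmeas]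
  congr 1
  ext ω
  simp only [Function.comp_apply]
  conv_lhs => rw [pi_eq_sum_univ' fun i => Z (k i) ω, map_sum]
  refine Finset.sum_congr rfl fun i _ => ?_
  rw [map_smul, smul_eq_mul, mul_comm]

lemma hasGaussianLaw (hZ : IsCSG Z r) (k : ℤ) : HasGaussianLaw (Z k) (ℙ : Measure Ω) :=
  (hZ.hasGaussianLaw_pi fun _ : Fin 1 => k).eval 0

lemma isProbabilityMeasure (hZ : IsCSG Z r) : IsProbabilityMeasure (ℙ : Measure Ω) :=
  (hZ.hasGaussianLaw 0).isProbabilityMeasure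

lemma integral_eq_zero (hZ : IsCSG Z r) (k : ℤ) : ∫ ω, Z k ω = 0 := by
  obtain ⟨v, hv⟩ := hZ.exists_map_sum_eq_gaussianReal (fun _ : Fin 1 => k) 1
  simp only [Pi.one_apply, one_mul, Finset.univ_unique, Finset.sum_singleton] at hv
  rw [← integral_id_gaussianReal (μ := 0) (v := v), ← hv,
    integral_map (hZ.1 k).aemeasurable (by fun_prop)]

lemma covariance_eq (hZ : IsCSG Z r) (j k : ℤ) : cov[Z j, Z k; ℙ] = r (k - j) := by
  have := hZ.isProbabilityMeasure
  rw [covariance_eq_sub (hZ.hasGaussianLaw j).memLp_two (hZ.hasGaussianLaw k).memLp_two,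
    hZ.integral_eq_zero, zero_mul, sub_zero, ← hZ.2.2.1]
  rfl

lemma variance_eq (hZ : IsCSG Z r) (k : ℤ) : Var[Z k; ℙ] = (r 0).toNNReal := by
  rw [← covariance_self (hZ.1 k).aemeasurable, hZ.covariance_eq, sub_self,
    Real.coe_toNNReal _ hZ.2.2.2.le]

lemma map_eq_gaussianReal (hZ : IsCSG Z r) (k : ℤ) :
    (ℙ : Measure Ω).map (Z k) = gaussianReal 0 (r 0).toNNReal := by
  rw [(hZ.hasGaussianLaw k).map_eq_gaussianReal, hZ.integral_eq_zero, hZ.variance_eq,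
    Real.toNNReal_coe]

lemma integral_comp_eq_lamE (hZ : IsCSG Z r) (hf : Measurable f) (k : ℤ) :
    ∫ ω, f (Z k ω) = lamE f Z := by
  rw [lamE, ← integral_map (hZ.1 k).aemeasurable hf.aestronglyMeasurable,
    ← integral_map (hZ.1 0).aemeasurable hf.aestronglyMeasurable, hZ.map_eq_gaussianReal,
    hZ.map_eq_gaussianReal]

lemma memLp_two_comp (hZ : IsCSG Z r) (hf : EvenWithGrowth f K N) (k : ℤ) :
    MemLp (fun ω => f (Z k ω)) 2 :=
  memLp_two_comp_of_hasGaussianLaw (hZ.hasGaussianLaw k) hf.contDiff.continuous.measurable hf.abs_le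

lemma measurable_Qvar (hZ : IsCSG Z r) (hf : Measurable f) (n : ℕ) : Measurable (Qvar f Z n) :=
  (Finset.measurable_fun_sum _ fun (i : ℕ) _ => hf.comp (hZ.1 i)).const_mul _

lemma memLp_two_Qvar (hZ : IsCSG Z r) (hf : EvenWithGrowth f K N) (n : ℕ) :
    MemLp (Qvar f Z n) 2 :=
  (memLp_finsetSum (f := fun (i : ℕ) ω => f (Z i ω)) _ fun i _ =>
    hZ.memLp_two_comp hf i).const_mul _

lemma integral_Qvar (hZ : IsCSG Z r) (hf : EvenWithGrowth f K N) {n : ℕ} (hn : 1 ≤ n) :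
    ∫ ω, Qvar f Z n ω = lamE f Z := by
  have := hZ.isProbabilityMeasure
  have hn' : (n : ℝ) ≠ 0 := by positivity
  simp only [Qvar]
  rw [integral_const_mul,
    integral_finsetSum (f := fun (i : ℕ) ω => f (Z i ω)) _ fun i _ =>
      (hZ.memLp_two_comp hf i).integrable one_le_two]
  simp only [hZ.integral_comp_eq_lamE hf.contDiff.continuous.measurable, Finset.sum_const,
    Finset.card_range, nsmul_eq_mul]
  field_simp

lemma variance_Qvar (hZ : IsCSG Z r) (hf : EvenWithGrowth f K N) {n : ℕ} (hn : 1 ≤ n) :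
    Var[Qvar f Z n; ℙ] = varU f Z n / n := by
  have hn' : (n : ℝ) ≠ 0 := by positivity
  rw [variance_eq_integral (hZ.memLp_two_Qvar hf n).aemeasurable, hZ.integral_Qvar hf hn, varU]
  simp only [Ustat, mul_pow, Real.sq_sqrt n.cast_nonneg]
  rw [integral_const_mul, mul_div_cancel_left₀ _ hn']

lemma varU_eq_sum_covariance (hZ : IsCSG Z r) (hf : EvenWithGrowth f K N) {n : ℕ} (hn : 1 ≤ n) :
    varU f Z n = (∑ i ∈ Finset.range n, ∑ j ∈ Finset.range n,
      cov[fun ω => f (Z i ω), fun ω => f (Z j ω); ℙ]) / n := by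
  have := hZ.isProbabilityMeasure
  have hn' : (n : ℝ) ≠ 0 := by positivity
  have hvar := hZ.variance_Qvar hf hn
  rw [show Qvar f Z n = fun ω => 1 / (n : ℝ) * ∑ i ∈ Finset.range n, f (Z i ω) from rfl,
    variance_const_mul,
    variance_fun_sum' (X := fun (i : ℕ) ω => f (Z i ω)) fun i _ => hZ.memLp_two_comp hf i] at hvar
  field_simp at hvar ⊢
  exact hvar.symm

lemma covariance_comp_mem_Icc (hZ : IsCSG Z r) (hf : EvenWithGrowth f K N) (j k : ℤ) :
    cov[fun ω => f (Z j ω), fun ω => f (Z k ω); ℙ]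
      ∈ Set.Icc 0 (mehlerConst (r 0).toNNReal K N / r 0 ^ 2 * r (k - j) ^ 2) := by
  have h := _root_.covariance_comp_mem_Icc (v := (r 0).toNNReal) hf
    (Real.toNNReal_pos.2 hZ.2.2.2).ne' (hZ.hasGaussianLaw_pi ![j, k])
    (fun i => hZ.integral_eq_zero _) fun i => hZ.variance_eq _
  simpa [hZ.covariance_eq, Real.coe_toNNReal _ hZ.2.2.2.le] using h

lemma varU_one_le (hZ : IsCSG Z r) (hf : EvenWithGrowth f K N) {n : ℕ} (hn : 1 ≤ n) :
    varU f Z 1 ≤ varU f Z n := by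
  have hself (k : ℤ) : cov[fun ω => f (Z k ω), fun ω => f (Z k ω); ℙ] = varU f Z 1 := by
    have hcomp : AEMeasurable (fun ω => f (Z k ω)) (ℙ : Measure Ω) :=
      (hf.contDiff.continuous.measurable.comp (hZ.1 k)).aemeasurable
    rw [covariance_self hcomp, variance_eq_integral hcomp,
      hZ.integral_comp_eq_lamE hf.contDiff.continuous.measurable, varU]
    simp only [Ustat, Qvar, Nat.cast_one, Real.sqrt_one, one_div, inv_one, one_mul,
      Finset.sum_range_one, Nat.cast_zero]
    exact hZ.integral_comp_eq_lamE (f := fun x => (f x - lamE f Z) ^ 2)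
      ((hf.contDiff.continuous.measurable.sub_const _).pow_const 2) k
  have hdiag := Finset.sum_le_sum fun i (hi : i ∈ Finset.range n) =>
    Finset.single_le_sum (f := fun j : ℕ => cov[fun ω => f (Z i ω), fun ω => f (Z j ω); ℙ])
      (fun j _ => (hZ.covariance_comp_mem_Icc hf i j).1) hi
  simp only [hself, Finset.sum_const, Finset.card_range, nsmul_eq_mul] at hdiag
  rw [hZ.varU_eq_sum_covariance hf hn, le_div_iff₀ (by positivity), mul_comm]
  exact hdiag

lemma exists_varU_le (hZ : IsCSG Z r) (hsum : Summable fun j => r j ^ 2)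
    (hf : EvenWithGrowth f K N) : ∃ V > 0, ∀ n ≥ 1, varU f Z n ≤ V := by
  set C := mehlerConst (r 0).toNNReal K N / r 0 ^ 2 * ∑' j, r j ^ 2
  have hcoef : 0 ≤ mehlerConst (r 0).toNNReal K N / r 0 ^ 2 :=
    div_nonneg (integral_nonneg fun _ => sq_nonneg _) (sq_nonneg _)
  have hrow (n i : ℕ) : ∑ j ∈ Finset.range n,
      cov[fun ω => f (Z i ω), fun ω => f (Z j ω); ℙ] ≤ C := by
    have hinj : Function.Injective fun j : ℕ => (j : ℤ) - i :=
      (sub_left_injective (b := (i : ℤ))).comp Nat.cast_injective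
    refine (Finset.sum_le_sum fun (j : ℕ) _ => (hZ.covariance_comp_mem_Icc hf i j).2).trans ?_
    rw [← Finset.mul_sum]
    exact mul_le_mul_of_nonneg_left (((hsum.comp_injective hinj).sum_le_tsum _
      fun _ _ => sq_nonneg _).trans
        (tsum_comp_le_tsum_of_inj hsum (fun _ => sq_nonneg _) hinj)) hcoef
  refine ⟨max C 1, by positivity, fun n hn => ?_⟩
  rw [hZ.varU_eq_sum_covariance hf hn, div_le_iff₀ (by positivity), mul_comm]
  refine (Finset.sum_le_sum fun i _ => (hrow n i).trans (le_max_left C 1)).trans_eq ?_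
  rw [Finset.sum_const, Finset.card_range, nsmul_eq_mul]

end IsCSG

/-! ### The Wasserstein distance on the line -/

section Wasserstein

variable {S : Type*} [MeasurableSpace S] {P : Measure S} {X Y : S → ℝ} {μ ν : Measure ℝ}

lemma integrable_comp_of_lipschitzWith [IsFiniteMeasure P] {f : ℝ → ℝ} {K : ℝ≥0}
    (hf : LipschitzWith K f) (hX : Integrable X P) : Integrable (fun ω => f (X ω)) P := by
  refine ((hX.abs.const_mul K).add (integrable_const |f 0|)).mono'
    (hf.continuous.comp_aestronglyMeasurable hX.1) (ae_of_all _ fun ω => ?_)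
  have hdist : |f (X ω) - f 0| ≤ K * |X ω| := by
    simpa only [Real.dist_eq, sub_zero] using hf.dist_le_mul (X ω) 0
  exact (norm_le_norm_sub_add (f (X ω)) (f 0)).trans (add_le_add_left hdist _)

lemma abs_integral_comp_sub_le_of_lipschitzWith [IsFiniteMeasure P] {f : ℝ → ℝ} {K : ℝ≥0}
    (hf : LipschitzWith K f) (hX : Integrable X P) (hY : Integrable Y P) :
    |∫ ω, f (X ω) ∂P - ∫ ω, f (Y ω) ∂P| ≤ K * ∫ ω, |X ω - Y ω| ∂P := by
  rw [← integral_sub (integrable_comp_of_lipschitzWith hf hX)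
    (integrable_comp_of_lipschitzWith hf hY), ← integral_const_mul]
  exact norm_integral_le_of_norm_le (f := fun ω => f (X ω) - f (Y ω))
    ((hX.sub hY).abs.const_mul _) (ae_of_all _ fun ω => hf.dist_le_mul (X ω) (Y ω))

lemma dW_nonneg (μ ν : Measure ℝ) : 0 ≤ dW μ ν := Real.iSup_nonneg fun _ => abs_nonneg _

-- The supremum of `dW μ ν` runs over the translates of the identity, whose `μ`-integrals are all
-- `0` by convention, so it is infinite, hence `0` by convention.
lemma dW_eq_zero_of_not_integrable [IsProbabilityMeasure μ] [IsProbabilityMeasure ν]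
    (hμ : ¬ Integrable (fun x => x) μ) (hν : Integrable (fun x => x) ν) : dW μ ν = 0 := by
  refine Real.iSup_of_not_bddAbove fun ⟨B, hB⟩ => ?_
  have hle (c : ℝ) : |∫ x, x ∂ν + c| ≤ B := by
    have hlip : LipschitzWith 1 fun x : ℝ => x + c :=
      LipschitzWith.of_dist_le_mul fun x y => by simp
    have hundef : ¬ Integrable (fun x : ℝ => x + c) μ := fun h =>
      hμ ((h.sub (integrable_const c)).congr (ae_of_all _ fun x => by simp))
    have hc := hB ⟨⟨_, hlip⟩, rfl⟩
    simp only [integral_undef hundef, zero_sub, abs_neg] at hc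
    rwa [integral_add hν (integrable_const c), integral_const, probReal_univ, one_smul] at hc
  have hB1 := hle (B + 1 - ∫ x, x ∂ν)
  rw [add_sub_cancel] at hB1
  linarith [le_abs_self (B + 1)]

lemma bddAbove_abs_integral_sub_of_lipschitzWith [IsProbabilityMeasure μ] [IsProbabilityMeasure ν]
    (hμ : Integrable (fun x => x) μ) (hν : Integrable (fun x => x) ν) :
    BddAbove (Set.range fun f : {f : ℝ → ℝ // LipschitzWith 1 f} =>
      |∫ x, f.1 x ∂μ - ∫ x, f.1 x ∂ν|) := by
  have hcenter (ρ : Measure ℝ) [IsProbabilityMeasure ρ] (hρ : Integrable (fun x => x) ρ)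
      (f : {f : ℝ → ℝ // LipschitzWith 1 f}) : |∫ x, f.1 x ∂ρ - f.1 0| ≤ ∫ x, |x| ∂ρ := by
    simpa using abs_integral_comp_sub_le_of_lipschitzWith f.2 hρ (integrable_const 0)
  refine ⟨∫ x, |x| ∂μ + ∫ x, |x| ∂ν, Set.forall_mem_range.2 fun f => ?_⟩
  have hν0 := hcenter ν hν f
  rw [abs_sub_comm] at hν0
  exact (abs_sub_le _ (f.1 0) _).trans (add_le_add (hcenter μ hμ f) hν0)

lemma dW_map_le_integral_abs_sub_add [IsProbabilityMeasure P] [IsProbabilityMeasure ν]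
    (hν : Integrable (fun x => x) ν) (hX : Integrable X P) (hY : Integrable Y P) :
    dW (P.map X) ν ≤ ∫ ω, |X ω - Y ω| ∂P + dW (P.map Y) ν := by
  have : Nonempty {f : ℝ → ℝ // LipschitzWith 1 f} := ⟨⟨id, LipschitzWith.id⟩⟩
  have : IsProbabilityMeasure (P.map Y) := Measure.isProbabilityMeasure_map hY.aemeasurable
  have hYid : Integrable (fun x => x) (P.map Y) :=
    (integrable_map_measure aestronglyMeasurable_id hY.aemeasurable).2 hY
  refine ciSup_le fun f => ?_
  have hsup := le_ciSup (bddAbove_abs_integral_sub_of_lipschitzWith hYid hν) f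
  have hXY := abs_integral_comp_sub_le_of_lipschitzWith f.2 hX hY
  rw [← integral_map hX.aemeasurable f.2.continuous.aestronglyMeasurable,
    ← integral_map hY.aemeasurable f.2.continuous.aestronglyMeasurable, NNReal.coe_one,
    one_mul] at hXY
  exact (abs_sub_le _ _ _).trans (add_le_add hXY hsup)

end Wasserstein

/-! ### Tails of the empirical moments -/

section Fernique

variable {E : Type*} [NormedAddCommGroup E] [MeasurableSpace E] [BorelSpace E] {ν : Measure E}
  {a δ T : ℝ}

lemma ofReal_one_sub_le_measure_norm_le [IsProbabilityMeasure ν] (hδ : 0 ≤ δ)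
    (hν : ν {x | a < ‖x‖} ≤ ENNReal.ofReal δ) : ENNReal.ofReal (1 - δ) ≤ ν {x | ‖x‖ ≤ a} := by
  have hcompl := prob_compl_eq_one_sub (μ := ν) (measurableSet_lt measurable_const
    measurable_norm : MeasurableSet {x : E | a < ‖x‖})
  rw [show {x : E | ‖x‖ ≤ a} = {x | a < ‖x‖}ᶜ by ext; simp, hcompl, ENNReal.ofReal_sub _ hδ,
    ENNReal.ofReal_one]
  exact tsub_le_tsub_left hν 1

lemma one_le_log_odds (hδ : 0 < δ) (hδ4 : δ ≤ 1 / 4) : 1 ≤ Real.log ((1 - δ) / δ) := by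
  have hthree : 3 ≤ (1 - δ) / δ := (le_div_iff₀ hδ).2 (by linarith)
  rw [Real.le_log_iff_exp_le (by linarith)]
  linarith [Real.exp_one_lt_d9]

variable [NormedSpace ℝ E] [SecondCountableTopology E]

/-- The constant prefactor of the Gaussian tail bounds obtained from Fernique's theorem. -/
def ferniqueConst : ℝ := 1 + ∑' k : ℕ, Real.exp (-2⁻¹ * 2 ^ k)

/-- The logarithm of the odds of a ball divided by this constant is the rate in Fernique's theorem,
see `Fernique.logRatio`. -/
def ferniqueScale : ℝ := 8 * (1 + √2) ^ 2

lemma ferniqueScale_pos : 0 < ferniqueScale := by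
  unfold ferniqueScale
  positivity

lemma summable_exp_neg_half_mul_two_pow : Summable fun k : ℕ => Real.exp (-2⁻¹ * 2 ^ k) := by
  simpa using Real.summable_exp_nat_mul_of_ge (c := -2⁻¹) (f := fun k => 2 ^ k) (by norm_num)
    fun k => mod_cast (Nat.lt_pow_self one_lt_two).le

lemma ferniqueConst_pos : 0 < ferniqueConst :=
  add_pos_of_pos_of_nonneg one_pos (tsum_nonneg fun _ => (Real.exp_pos _).le)

lemma lintegral_exp_mul_sq_norm_le_ferniqueConst [IsProbabilityMeasure ν]
    (hrot : (ν.prod ν).map (ContinuousLinearMap.rotation (-(Real.pi / 4))) = ν.prod ν)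
    (hδ : 0 < δ) (hδ4 : δ ≤ 1 / 4) (hν : ν {x | a < ‖x‖} ≤ ENNReal.ofReal δ) :
    ∫⁻ x, ENNReal.ofReal
        (Real.exp (Real.log ((1 - δ) / δ) / ferniqueScale * a⁻¹ ^ 2 * ‖x‖ ^ 2)) ∂ν
      ≤ ENNReal.ofReal
        (Real.exp (Real.log ((1 - δ) / δ) / ferniqueScale) * ferniqueConst) := by
  set c : ℝ≥0∞ := ENNReal.ofReal (1 - δ)
  have hc1 : 1 - c = ENNReal.ofReal δ := by
    rw [← ENNReal.ofReal_one, ← ENNReal.ofReal_sub _ (by linarith), sub_sub_cancel]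
  have hcr : c.toReal = 1 - δ := ENNReal.toReal_ofReal (by linarith)
  have hc1r : (1 - c).toReal = δ := by rw [hc1, ENNReal.toReal_ofReal hδ.le]
  have hhalf : 2⁻¹ < c := by
    rw [← ENNReal.ofReal_ofNat 2, ← ENNReal.ofReal_inv_of_pos two_pos]
    exact (ENNReal.ofReal_lt_ofReal_iff (by linarith)).2 (by linarith)
  have hrate : Fernique.logRatio c = Real.log ((1 - δ) / δ) / ferniqueScale := by
    rw [Fernique.logRatio, hcr, hc1r, ferniqueScale]
  have hodds : 1 ≤ Real.log ((1 - δ) / δ) := one_le_log_odds hδ hδ4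
  have hone : 1 ≤ Real.exp (Real.log ((1 - δ) / δ) / ferniqueScale) :=
    Real.one_le_exp (div_nonneg (by linarith) ferniqueScale_pos.le)
  have hsum : ∑' k : ℕ, ENNReal.ofReal (Real.exp (-2⁻¹ * Real.log (c / (1 - c)).toReal * 2 ^ k))
      ≤ ENNReal.ofReal (∑' k : ℕ, Real.exp (-2⁻¹ * 2 ^ k)) := by
    rw [ENNReal.ofReal_tsum_of_nonneg (fun _ => (Real.exp_pos _).le)
      summable_exp_neg_half_mul_two_pow, ENNReal.toReal_div, hcr, hc1r]
    gcongr with k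
    linarith
  rw [← hrate] at hone ⊢
  refine (lintegral_exp_mul_sq_norm_le_of_map_rotation_eq_self hrot
    (ofReal_one_sub_le_measure_norm_le hδ.le hν) hhalf).trans ((add_le_add_right hsum _).trans ?_)
  rw [← ENNReal.ofReal_add (Real.exp_pos _).le (tsum_nonneg fun _ => (Real.exp_pos _).le),
    ferniqueConst, mul_add, mul_one]
  gcongr
  exact le_mul_of_one_le_left (tsum_nonneg fun _ => (Real.exp_pos _).le) hone

lemma measure_mul_sq_le_sq_norm_le [IsProbabilityMeasure ν]
    (hrot : (ν.prod ν).map (ContinuousLinearMap.rotation (-(Real.pi / 4))) = ν.prod ν)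
    (ha : 0 < a) (hδ : 0 < δ) (hδ4 : δ ≤ 1 / 4) (hν : ν {x | a < ‖x‖} ≤ ENNReal.ofReal δ)
    (hT : 1 ≤ T) :
    ν {x | T * a ^ 2 ≤ ‖x‖ ^ 2}
      ≤ ENNReal.ofReal (ferniqueConst * (2 * δ) ^ ((T - 1) / ferniqueScale)) := by
  set L := Real.log ((1 - δ) / δ) / ferniqueScale with hL
  have hR : 0 < (1 - δ) / δ := div_pos (by linarith) hδ
  have hL0 : 0 ≤ L := div_nonneg (Real.log_nonneg ((one_le_div hδ).2 (by linarith)))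
    ferniqueScale_pos.le
  have hexp : Real.exp (-(L * (T - 1))) ≤ (2 * δ) ^ ((T - 1) / ferniqueScale) := by
    have hinv : ((1 - δ) / δ)⁻¹ ≤ 2 * δ := by
      rw [inv_div, div_le_iff₀ (by linarith)]
      nlinarith
    calc Real.exp (-(L * (T - 1))) = ((1 - δ) / δ)⁻¹ ^ ((T - 1) / ferniqueScale) := by
          rw [Real.rpow_def_of_pos (inv_pos.2 hR), Real.log_inv, hL]
          ring_nf
      _ ≤ _ := Real.rpow_le_rpow (inv_pos.2 hR).le hinv
          (div_nonneg (by linarith) ferniqueScale_pos.le)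
  have hsub : {x : E | T * a ^ 2 ≤ ‖x‖ ^ 2} ⊆ {x | ENNReal.ofReal (Real.exp (L * T))
      ≤ ENNReal.ofReal (Real.exp (L * a⁻¹ ^ 2 * ‖x‖ ^ 2))} := fun x hx => by
    refine ENNReal.ofReal_le_ofReal (Real.exp_le_exp.2 ?_)
    rw [mul_assoc, inv_pow, inv_mul_eq_div]
    exact mul_le_mul_of_nonneg_left ((le_div_iff₀ (by positivity)).2 hx) hL0
  refine (measure_mono hsub).trans ((meas_ge_le_lintegral_div (by fun_prop)
    (by simp [Real.exp_pos]) ENNReal.ofReal_ne_top).trans ?_)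
  refine (ENNReal.div_le_div_right
    (lintegral_exp_mul_sq_norm_le_ferniqueConst hrot hδ hδ4 hν) _).trans ?_
  rw [← ENNReal.ofReal_div_of_pos (Real.exp_pos _)]
  refine ENNReal.ofReal_le_ofReal ?_
  calc Real.exp L * ferniqueConst / Real.exp (L * T)
      = ferniqueConst * Real.exp (-(L * (T - 1))) := by
        rw [show -(L * (T - 1)) = L - L * T by ring, Real.exp_sub]
        ring
    _ ≤ _ := mul_le_mul_of_nonneg_left hexp ferniqueConst_pos.le

end Fernique

section EmpiricalMoment

open scoped BigOperators

variable {ι : Type*} [Fintype ι]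

lemma map_rotation_toLp_eq_self {μ : Measure (ι → ℝ)} [IsGaussian μ]
    (hmean : ∀ i, ∫ x, x i ∂μ = 0) (q : ℝ≥0∞) [Fact (1 ≤ q)] (θ : ℝ) :
    ((μ.map (WithLp.toLp q)).prod (μ.map (WithLp.toLp q))).map (ContinuousLinearMap.rotation θ)
      = (μ.map (WithLp.toLp q)).prod (μ.map (WithLp.toLp q)) := by
  let e := (PiLp.continuousLinearEquiv q ℝ fun _ : ι => ℝ).symm
  have hgauss : IsGaussian (μ.map e) := isGaussian_map_equiv e
  refine IsGaussian.map_rotation_eq_self (μ := μ.map e) ?_ θ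
  have hlaw : HasGaussianLaw (fun x : ι → ℝ => x) μ := IsGaussian.hasGaussianLaw_id
  have hzero : ∫ x, x ∂μ = 0 := funext fun i =>
    (eval_integral (fun i => (hlaw.eval i).integrable) i).trans (hmean i)
  rw [integral_map e.continuous.aemeasurable (by fun_prop)]
  exact (e.integral_comp_comm _).trans (by rw [hzero, map_zero])

lemma norm_toLp_pow [Nonempty ι] {p : ℕ} (hp : p ≠ 0) (x : ι → ℝ) :
    ‖(WithLp.toLp (2 * p : ℕ) x : PiLp (2 * p : ℕ) fun _ : ι => ℝ)‖ ^ (2 * p)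
      = Fintype.card ι * 𝔼 i, x i ^ (2 * p) := by
  have hpos : 0 < ((2 * p : ℕ) : ℝ) := by positivity
  have hsum : 0 ≤ ∑ i, x i ^ (2 * p) := Finset.sum_nonneg fun i _ => (even_two_mul p).pow_nonneg _
  rw [PiLp.norm_eq_sum (by simpa using hpos), ENNReal.toReal_natCast]
  simp only [Real.rpow_natCast, Real.norm_eq_abs, (even_two_mul p).pow_abs]
  rw [one_div, Real.rpow_inv_natCast_pow hsum (by positivity), Fintype.card_mul_expect]

lemma measure_mul_pow_le_expect_pow_le [Nonempty ι] {μ : Measure (ι → ℝ)} [IsGaussian μ]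
    (hmean : ∀ i, ∫ x, x i ∂μ = 0) {p : ℕ} (hp : p ≠ 0) {M δ T : ℝ} (hM : 0 < M) (hδ : 0 < δ)
    (hδ4 : δ ≤ 1 / 4) (hμ : μ {x | M < 𝔼 i, x i ^ (2 * p)} ≤ ENNReal.ofReal δ) (hT : 1 ≤ T) :
    μ {x | M * T ^ p ≤ 𝔼 i, x i ^ (2 * p)}
      ≤ ENNReal.ofReal (ferniqueConst * (2 * δ) ^ ((T - 1) / ferniqueScale)) := by
  obtain ⟨q, hq⟩ : ∃ q : ℝ≥0∞, q = (2 * p : ℕ) := ⟨_, rfl⟩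
  have hnorm (x : ι → ℝ) : ‖(WithLp.toLp q x : PiLp q fun _ : ι => ℝ)‖ ^ (2 * p)
      = Fintype.card ι * 𝔼 i, x i ^ (2 * p) := hq ▸ norm_toLp_pow hp x
  have : Fact (1 ≤ q) := ⟨by rw [hq]; exact_mod_cast (by lia : 1 ≤ 2 * p)⟩
  have hto : Measurable (WithLp.toLp q : (ι → ℝ) → PiLp q fun _ : ι => ℝ) := by
    fun_prop
  have hprob := Measure.isProbabilityMeasure_map (μ := μ) hto.aemeasurable
  have hcard : 0 < Fintype.card ι * M := by positivity
  set a := (Fintype.card ι * M) ^ ((2 * p : ℕ) : ℝ)⁻¹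
  have ha : 0 < a := Real.rpow_pos_of_pos hcard _
  have hap : a ^ (2 * p) = Fintype.card ι * M := Real.rpow_inv_natCast_pow hcard.le (by lia)
  have hball : μ.map (WithLp.toLp q) {y | a < ‖y‖} ≤ ENNReal.ofReal δ := by
    rw [Measure.map_apply hto (measurableSet_lt measurable_const measurable_norm)]
    refine (measure_mono fun x hx => ?_).trans hμ
    have hlt := pow_lt_pow_left₀ (n := 2 * p) hx ha.le (by lia)
    rw [hap, hnorm] at hlt
    exact lt_of_mul_lt_mul_left hlt (by positivity)
  have htail :=
    measure_mul_sq_le_sq_norm_le (map_rotation_toLp_eq_self hmean q _) ha hδ hδ4 hball hT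
  rw [Measure.map_apply hto (measurableSet_le measurable_const (by fun_prop))] at htail
  refine (measure_mono fun x hx => ?_).trans htail
  refine Set.mem_preimage.2 (Set.mem_ofPred.2 (le_of_pow_le_pow_left₀ hp (by positivity) ?_))
  rw [mul_pow, ← pow_mul, ← pow_mul, hnorm, hap, mul_left_comm, mul_comm (T ^ p)]
  exact mul_le_mul_of_nonneg_left hx (by positivity)

lemma Qvar_eq_expect {Ω : Type*} (f : ℝ → ℝ) (X : ℤ → Ω → ℝ) (n : ℕ) (ω : Ω) :
    Qvar f X n ω = 𝔼 i : Fin n, f (X (i : ℕ) ω) := by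
  rw [Qvar, Fintype.expect_eq_sum_div_card, Fintype.card_fin,
    Fin.sum_univ_eq_sum_range fun i : ℕ => f (X i ω), one_div, inv_mul_eq_div]

lemma measurable_expect_pow (p : ℕ) : Measurable fun x : ι → ℝ => 𝔼 i, x i ^ (2 * p) := by
  simp only [Fintype.expect_eq_sum_div_card]
  fun_prop

lemma rpow_div_le_sq_mul_exp_neg {D c x T : ℝ} (hD : 0 < D) (hx : 0 < x)
    (hxc : Real.log x ≤ -(4 * D * c)) (hc : 0 ≤ c) (hT : 2 + 8 * D ≤ T) :
    x ^ ((T - 1) / D) ≤ x ^ 2 * Real.exp (-(c * T)) := by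
  have hexp : T / (4 * D) ≤ (T - 1) / D - 2 := by
    rw [div_sub' hD.ne', div_le_div_iff₀ (by positivity) hD]
    nlinarith
  have hlog : Real.log x * ((T - 1) / D - 2) ≤ -(c * T) :=
    calc Real.log x * ((T - 1) / D - 2) ≤ Real.log x * (T / (4 * D)) :=
          mul_le_mul_of_nonpos_left hexp (hxc.trans (neg_nonpos.2 (by positivity)))
      _ ≤ -(4 * D * c) * (T / (4 * D)) := by gcongr; exact div_nonneg (by linarith) (by linarith)
      _ = -(c * T) := by field_simp
  calc x ^ ((T - 1) / D) = x ^ (2 : ℕ) * x ^ ((T - 1) / D - 2) := by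
        rw [← Real.rpow_natCast, ← Real.rpow_add hx, Nat.cast_ofNat, add_sub_cancel]
    _ ≤ x ^ 2 * Real.exp (-(c * T)) := by
        rw [Real.rpow_def_of_pos hx ((T - 1) / D - 2)]
        gcongr

end EmpiricalMoment

/-- The law of `(Z 0, …, Z (n - 1))`. -/
def vecLaw (Z : ℤ → Ω → ℝ) (n : ℕ) : Measure (Fin n → ℝ) :=
  (ℙ : Measure Ω).map fun ω i => Z (i : ℕ) ω

namespace IsCSG

open scoped BigOperators

variable {Z : ℤ → Ω → ℝ} {r : ℤ → ℝ} {p : ℕ}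

lemma isGaussian_vecLaw (hZ : IsCSG Z r) (n : ℕ) : IsGaussian (vecLaw Z n) :=
  (hZ.hasGaussianLaw_pi fun i : Fin n => (i : ℤ)).isGaussian_map

lemma measurable_vec (hZ : IsCSG Z r) (n : ℕ) : Measurable fun ω (i : Fin n) => Z (i : ℕ) ω :=
  measurable_pi_lambda _ fun i => hZ.1 (i : ℕ)

lemma integral_vecLaw_eval (hZ : IsCSG Z r) (n : ℕ) (i : Fin n) : ∫ x, x i ∂vecLaw Z n = 0 := by
  rw [vecLaw, integral_map (hZ.measurable_vec n).aemeasurable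
    (measurable_pi_apply i).aestronglyMeasurable]
  exact hZ.integral_eq_zero _

lemma exists_vecLaw_expect_pow_gt_le (hZ : IsCSG Z r) (hsum : Summable fun j => r j ^ 2) (p : ℕ) :
    ∃ M > 0, ∃ K > 0, ∀ n ≥ 1,
      vecLaw Z n {x | M < 𝔼 i, x i ^ (2 * p)} ≤ ENNReal.ofReal (K / n) := by
  have := hZ.isProbabilityMeasure
  obtain ⟨K, N, hf⟩ := exists_evenWithGrowth_eval (Q := Polynomial.X ^ (2 * p)) fun x => by
    simp [(even_two_mul p).neg_pow]
  set f := (Polynomial.X ^ (2 * p) : Polynomial ℝ).eval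
  obtain ⟨V, hV, hVn⟩ := hZ.exists_varU_le hsum hf
  refine ⟨|lamE f Z| + 1, by positivity, V, hV, fun n hn => ?_⟩
  rw [vecLaw, Measure.map_apply (hZ.measurable_vec n) (measurableSet_lt measurable_const
    (measurable_expect_pow p))]
  refine (measure_mono fun ω hω => ?_).trans
    ((meas_ge_le_variance_div_sq (hZ.memLp_two_Qvar hf n) one_pos).trans ?_)
  · have hQ : |lamE f Z| + 1 < Qvar f Z n ω := by
      simpa [f, Qvar_eq_expect] using hω
    rw [Set.mem_ofPred, hZ.integral_Qvar hf hn]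
    exact le_abs.2 (.inl (by linarith [le_abs_self (lamE f Z)]))
  · rw [one_pow, div_one, hZ.variance_Qvar hf hn]
    gcongr
    exact hVn n hn

lemma exists_eventually_vecLaw_expect_pow_ge_le (hZ : IsCSG Z r)
    (hsum : Summable fun j => r j ^ 2) (hp : p ≠ 0) :
    ∃ M > 0, ∃ T₀ > 0, ∀ c ≥ 0, ∃ C > 0, ∀ᶠ n : ℕ in atTop, ∀ T ≥ T₀,
      vecLaw Z n {x | M * T ^ p ≤ 𝔼 i, x i ^ (2 * p)}
        ≤ ENNReal.ofReal (C / n ^ 2 * Real.exp (-(c * T))) := by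
  obtain ⟨M, hM, K, hK, hMK⟩ := hZ.exists_vecLaw_expect_pow_gt_le hsum p
  refine ⟨M, hM, 2 + 8 * ferniqueScale, by linarith [ferniqueScale_pos], fun c hc =>
    ⟨ferniqueConst * (2 * K) ^ 2, by positivity [ferniqueConst_pos], ?_⟩⟩
  have hlim : Tendsto (fun n : ℕ => 2 * (K / n)) atTop (nhdsWithin 0 (Set.Ioi 0)) :=
    tendsto_nhdsWithin_iff.2 ⟨by simpa using (tendsto_const_div_atTop_nhds_zero_nat K).const_mul 2,
      (eventually_ge_atTop 1).mono fun n hn => Set.mem_Ioi.2 (by positivity)⟩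
  filter_upwards [eventually_ge_atTop 1,
    hlim.eventually (eventually_nhdsWithin_of_eventually_nhds (eventually_le_nhds (b := 1 / 2)
      (by norm_num))),
    (Real.tendsto_log_nhdsGT_zero.comp hlim).eventually_le_atBot (-(4 * ferniqueScale * c))]
    with n hn hn4 hlog T hT
  have := hZ.isGaussian_vecLaw n
  have : Nonempty (Fin n) := ⟨⟨0, hn⟩⟩
  have hδ : 0 < K / n := by positivity
  refine (measure_mul_pow_le_expect_pow_le (hZ.integral_vecLaw_eval n) hp hM hδ (by linarith)
    (hMK n hn) (by linarith [ferniqueScale_pos])).trans (ENNReal.ofReal_le_ofReal ?_)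
  calc _ ≤ ferniqueConst * ((2 * (K / n)) ^ 2 * Real.exp (-(c * T))) :=
        mul_le_mul_of_nonneg_left (rpow_div_le_sq_mul_exp_neg ferniqueScale_pos (by positivity)
          hlog hc hT) ferniqueConst_pos.le
    _ = _ := by ring

end IsCSG

/-! ### Radial changes of variables -/

section Radial

lemma monotoneOn_of_sub_le_mul_deriv {φ : ℝ → ℝ} (hφ : Differentiable ℝ φ) {C : ℝ}
    (hC : ∀ s > 0, φ s - C ≤ s * deriv φ s) : MonotoneOn φ {s | 0 < s ∧ C ≤ φ s} := by
  have hdiv (s : ℝ) (hs : s ∈ Set.Ioi (0 : ℝ)) : HasDerivAt (fun s => (φ s - C) / s)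
      ((deriv φ s * s - (φ s - C) * 1) / s ^ 2) s :=
    ((hφ s).hasDerivAt.sub_const C).div (hasDerivAt_id s) (Set.mem_Ioi.1 hs).ne'
  have hmono : MonotoneOn (fun s => (φ s - C) / s) (Set.Ioi 0) := by
    refine monotoneOn_of_hasDerivWithinAt_nonneg
      (f' := fun s => (deriv φ s * s - (φ s - C) * 1) / s ^ 2) (convex_Ioi 0)
      (fun s hs => (hdiv s hs).continuousAt.continuousWithinAt) (fun s hs => ?_) fun s hs => ?_
    · exact (hdiv s (interior_subset hs)).hasDerivWithinAt
    · exact div_nonneg (by linarith [hC s (interior_subset hs)]) (sq_nonneg s)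
  intro s hs t ht hst
  have hle := hmono hs.1 ht.1 hst
  simp only [div_le_div_iff₀ hs.1 ht.1] at hle
  nlinarith [hs.1, hs.2, mul_nonneg (sub_nonneg.2 hs.2) (sub_nonneg.2 hst)]

lemma setLIntegral_comp_le_of_sub_le_mul_deriv {φ : ℝ → ℝ} (hφ : Differentiable ℝ φ) {B C b : ℝ}
    (hC : ∀ s > 0, φ s - C ≤ s * deriv φ s) (hb : b ≤ 2) (hB : ∀ s ∈ Set.Icc 1 b, φ s ≤ B)
    {k : ℝ → ℝ≥0∞} (hk : ∀ t ≤ C + 2, k t = 0) :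
    ∫⁻ s in Set.Icc 1 b, k (φ s) ≤ ∫⁻ t in Set.Iic B, k t := by
  set S := {s | C + 2 < φ s} ∩ Set.Icc 1 b
  have hpos : MeasurableSet {s | C + 2 < φ s} :=
    measurableSet_lt measurable_const hφ.continuous.measurable
  have hS : MeasurableSet S := hpos.inter measurableSet_Icc
  have hmono : MonotoneOn φ S := (monotoneOn_of_sub_le_mul_deriv hφ hC).mono fun s hs =>
    ⟨by linarith [hs.2.1], by linarith [show C + 2 < φ s from hs.1]⟩
  calc ∫⁻ s in Set.Icc 1 b, k (φ s) = ∫⁻ s in S, k (φ s) := by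
        rw [← Measure.restrict_restrict hpos,
          setLIntegral_eq_of_support_subset (s := {s | C + 2 < φ s})]
        exact fun s hs => not_le.1 (mt (hk (φ s)) hs)
    _ ≤ ∫⁻ s in S, ENNReal.ofReal (deriv φ s) * k (φ s) := by
        refine setLIntegral_mono' hS fun s hs => le_mul_of_one_le_left' ?_
        rw [ENNReal.one_le_ofReal]
        have hlt : C + 2 < φ s := hs.1
        nlinarith [hC s (by linarith [hs.2.1]), hs.2.1, hs.2.2]
    _ = ∫⁻ t in φ '' S, k t := (lintegral_image_eq_lintegral_deriv_mul_of_monotoneOn hS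
        (fun s _ => (hφ s).hasDerivAt.hasDerivWithinAt) hmono k).symm
    _ ≤ ∫⁻ t in Set.Iic B, k t :=
        lintegral_mono_set (Set.image_subset_iff.2 fun s hs => hB s hs.2)

lemma lintegral_setLIntegral_Iic {α : Type*} [MeasurableSpace α] (μ : Measure α) [SFinite μ]
    {G : α → ℝ} (hG : Measurable G) {k : ℝ → ℝ≥0∞} (hk : Measurable k) :
    ∫⁻ x, (∫⁻ t in Set.Iic (G x), k t) ∂μ = ∫⁻ t, k t * μ {x | t ≤ G x} := by
  simp only [← lintegral_indicator measurableSet_Iic]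
  rw [lintegral_lintegral_swap]
  · refine lintegral_congr fun t => ?_
    rw [← lintegral_indicator_const (measurableSet_le measurable_const hG)]
    rfl
  · exact (Measurable.indicator (hk.comp measurable_snd)
      (measurableSet_le measurable_snd (hG.comp measurable_fst))).aemeasurable

variable {ι : Type*} [Fintype ι] {μ : Measure (ι → ℝ)} [IsGaussian μ]

lemma lintegral_le_three_mul_lintegral_smul (hmean : ∀ i, ∫ x, x i ∂μ = 0) {H : (ι → ℝ) → ℝ≥0∞}
    (hH : Measurable H) {s : ℝ} (hs : s ∈ Set.Icc 1 (1 + (Fintype.card ι : ℝ)⁻¹)) :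
    ∫⁻ x, H x ∂μ ≤ 3 * ∫⁻ x, H (s • x) ∂μ := by
  lift s to ℝ≥0 using zero_le_one.trans hs.1
  have hpow : s ^ Fintype.card ι ≤ 3 := by
    have hexp : (s : ℝ) ^ Fintype.card ι ≤ Real.exp 1 := by
      rcases Nat.eq_zero_or_pos (Fintype.card ι) with h0 | hpos
      · simp [h0]
      · calc (s : ℝ) ^ Fintype.card ι ≤ Real.exp (Fintype.card ι : ℝ)⁻¹ ^ Fintype.card ι := by
              gcongr
              linarith [hs.2, Real.add_one_le_exp (Fintype.card ι : ℝ)⁻¹]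
          _ = Real.exp 1 := by rw [← Real.exp_nat_mul, mul_inv_cancel₀ (by positivity)]
    exact_mod_cast hexp.trans (Real.exp_one_lt_three.le)
  calc ∫⁻ x, H x ∂μ ≤ ∫⁻ x, H x ∂(s ^ Fintype.card ι • μ.map (s • ·)) :=
        lintegral_mono' (le_smul_map_smul_of_isGaussian μ hmean hs.1) le_rfl
    _ = (s ^ Fintype.card ι : ℝ≥0) * ∫⁻ x, H (s • x) ∂μ := by
        rw [lintegral_smul_measure, lintegral_map hH (measurable_const_smul s)]
        rfl
    _ ≤ 3 * ∫⁻ x, H (s • x) ∂μ := by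
        gcongr
        exact_mod_cast hpow

lemma lintegral_comp_le_of_sub_le_mul_deriv [Nonempty ι] (hmean : ∀ i, ∫ x, x i ∂μ = 0)
    {F G : (ι → ℝ) → ℝ} (hF : Measurable F) (hG : Measurable G) {C : ℝ}
    (hdiff : ∀ x, Differentiable ℝ fun s : ℝ => F (s • x))
    (hC : ∀ x, ∀ s > 0, F (s • x) - C ≤ s * deriv (fun u : ℝ => F (u • x)) s)
    (hFG : ∀ x, ∀ s ∈ Set.Icc (1 : ℝ) 2, F (s • x) ≤ G x)
    {k : ℝ → ℝ≥0∞} (hk : Measurable k) (hk0 : ∀ t ≤ C + 2, k t = 0) :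
    ∫⁻ x, k (F x) ∂μ ≤ 3 * Fintype.card ι * ∫⁻ t, k t * μ {x | t ≤ G x} := by
  set I := Set.Icc 1 (1 + (Fintype.card ι : ℝ)⁻¹)
  have hcard : (Fintype.card ι : ℝ)⁻¹ ≤ 1 := Nat.cast_inv_le_one _
  have hI : (volume I : ℝ≥0∞) = (Fintype.card ι : ℝ≥0∞)⁻¹ := by
    rw [Real.volume_Icc, add_sub_cancel_left, ENNReal.ofReal_inv_of_pos (by positivity),
      ENNReal.ofReal_natCast]
  have hdil : (Fintype.card ι : ℝ≥0∞)⁻¹ * ∫⁻ x, k (F x) ∂μ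
      ≤ 3 * ∫⁻ t, k t * μ {x | t ≤ G x} :=
    calc _ = ∫⁻ _ in I, (∫⁻ x, k (F x) ∂μ) := by rw [setLIntegral_const, hI, mul_comm]
      _ ≤ ∫⁻ s in I, (3 * ∫⁻ x, k (F (s • x)) ∂μ) :=
          setLIntegral_mono' measurableSet_Icc fun s hs =>
            lintegral_le_three_mul_lintegral_smul hmean (hk.comp hF) hs
      _ = 3 * ∫⁻ x, (∫⁻ s in I, k (F (s • x))) ∂μ := by
          rw [lintegral_const_mul' _ _ (by simp), lintegral_lintegral_swap]
          exact (hk.comp (hF.comp measurable_smul)).aemeasurable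
      _ ≤ 3 * ∫⁻ x, (∫⁻ t in Set.Iic (G x), k t) ∂μ := by
          refine mul_le_mul_right (lintegral_mono fun x => ?_) 3
          exact setLIntegral_comp_le_of_sub_le_mul_deriv (hdiff x) (hC x) (by linarith)
            (fun s hs => hFG x s ⟨hs.1, hs.2.trans (by linarith)⟩) hk0
      _ = 3 * ∫⁻ t, k t * μ {x | t ≤ G x} := by
          rw [lintegral_setLIntegral_Iic μ hG hk]
  rw [mul_comm 3, mul_assoc]
  refine (ENNReal.inv_mul_le_iff ?_ ?_).1 hdil <;> simp

end Radial

section Growth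

open Polynomial
open scoped BigOperators

variable {P : ℝ[X]} {p : ℕ}

lemma tendsto_eval_atTop {m : ℕ} (hm : m ≠ 0) (hdeg : P.natDegree ≤ m) (hcoeff : 0 < P.coeff m) :
    Tendsto P.eval atTop atTop := by
  have hdeg' : P.natDegree = m := natDegree_eq_of_le_of_coeff_ne_zero hdeg hcoeff.ne'
  refine P.tendsto_atTop_of_leadingCoeff_nonneg (natDegree_pos_iff_degree_pos.1 (by lia)) ?_
  rw [leadingCoeff, hdeg']
  exact hcoeff.le

lemma exists_forall_le_eval (hp : p ≠ 0) (hdeg : P.natDegree ≤ 2 * p)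
    (hcoeff : 0 < P.coeff (2 * p)) : ∃ B, ∀ x, B ≤ P.eval x := by
  have hbot : Tendsto P.eval atBot atTop := by
    have hcomp : Tendsto (P.comp (C (-1) * X)).eval atTop atTop := by
      refine tendsto_eval_atTop (m := 2 * p) (by lia) ?_ ?_
      · exact natDegree_comp_le.trans
          ((Nat.mul_le_mul hdeg ((natDegree_C_mul_le _ _).trans natDegree_X_le)).trans
            (mul_one _).le)
      · rwa [comp_C_mul_X_coeff, (even_two_mul p).neg_one_pow, mul_one]
    simpa [Function.comp_def] using hcomp.comp tendsto_neg_atBot_atTop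
  obtain ⟨y, hy⟩ := P.continuous.exists_forall_le (by
    rw [cocompact_eq_atBot_atTop]
    exact hbot.sup (tendsto_eval_atTop (by lia) hdeg hcoeff))
  exact ⟨P.eval y, hy⟩

lemma exists_eval_sub_le_mul_eval_derivative (hp : p ≠ 0) (hdeg : P.natDegree ≤ 2 * p)
    (hcoeff : 0 < P.coeff (2 * p)) : ∃ C, ∀ x, P.eval x - C ≤ x * P.derivative.eval x := by
  have hp1 : (1 : ℝ) ≤ p := by exact_mod_cast Nat.one_le_iff_ne_zero.2 hp
  have hcoeff' : (X * derivative P - P).coeff (2 * p) = (2 * p - 1) * P.coeff (2 * p) := by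
    obtain ⟨m, hm⟩ : ∃ m, 2 * p = m + 1 := Nat.exists_eq_succ_of_ne_zero (by lia)
    have hm' : (2 * p : ℝ) = m + 1 := by exact_mod_cast hm
    rw [coeff_sub, hm, coeff_X_mul, coeff_derivative, hm']
    ring
  obtain ⟨B, hB⟩ := exists_forall_le_eval (P := X * derivative P - P) hp
    (natDegree_sub_le_of_le (natDegree_mul_le_of_le natDegree_X_le (natDegree_derivative_le P))
      le_rfl |>.trans (by lia)) (hcoeff' ▸ mul_pos (by linarith) hcoeff)
  refine ⟨-B, fun x => ?_⟩
  have hx := hB x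
  simp only [eval_sub, eval_mul, eval_X] at hx
  linarith

lemma exists_eval_le_mul_one_add_pow (hp : p ≠ 0) (hdeg : P.natDegree ≤ 2 * p) :
    ∃ K > 0, ∀ x, P.eval x ≤ K * (1 + x ^ (2 * p)) := by
  set a := |P.coeff (2 * p)| + 1
  obtain ⟨B, hB⟩ := exists_forall_le_eval (P := C a * X ^ (2 * p) - P) hp
    ((natDegree_sub_le_of_le (natDegree_C_mul_X_pow_le _ _) hdeg).trans (max_self _).le) (by
      rw [coeff_sub, coeff_C_mul, coeff_X_pow_self, mul_one]
      linarith [le_abs_self (P.coeff (2 * p))])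
  refine ⟨max a (-B), lt_max_of_lt_left (by positivity), fun x => ?_⟩
  have hx := hB x
  simp only [eval_sub, eval_mul, eval_C, eval_pow, eval_X] at hx
  have hpow : 0 ≤ x ^ (2 * p) := (even_two_mul p).pow_nonneg x
  nlinarith [le_max_left a (-B), le_max_right a (-B)]

variable {ι : Type*} [Fintype ι]

lemma continuous_expect_eval (P : ℝ[X]) : Continuous fun x : ι → ℝ => 𝔼 i, P.eval (x i) := by
  simp only [Fintype.expect_eq_sum_div_card]
  fun_prop

lemma hasDerivAt_expect_eval_smul (P : ℝ[X]) (x : ι → ℝ) (s : ℝ) :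
    HasDerivAt (fun u : ℝ => 𝔼 i, P.eval ((u • x) i))
      (𝔼 i, x i * P.derivative.eval (s * x i)) s := by
  simp only [Fintype.expect_eq_sum_div_card, Pi.smul_apply, smul_eq_mul]
  refine HasDerivAt.div_const (HasDerivAt.fun_sum fun i _ => ?_) _
  convert! (P.hasDerivAt (s * x i)).comp s ((hasDerivAt_id s).mul_const (x i)) using 1
  ring

lemma expect_eval_smul_le [Nonempty ι] {K : ℝ} (hK : 0 ≤ K)
    (hPK : ∀ x, P.eval x ≤ K * (1 + x ^ (2 * p))) (x : ι → ℝ) {s : ℝ} (hs : s ∈ Set.Icc 1 2) :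
    𝔼 i, P.eval ((s • x) i) ≤ K * (1 + 2 ^ (2 * p) * 𝔼 i, x i ^ (2 * p)) := by
  rw [Finset.mul_expect, ← Fintype.expect_const (ι := ι) (1 : ℝ), ← Finset.expect_add_distrib,
    Finset.mul_expect]
  refine Finset.expect_le_expect fun i _ => (hPK _).trans ?_
  rw [Pi.smul_apply, smul_eq_mul, mul_pow]
  have hx : 0 ≤ x i ^ (2 * p) := (even_two_mul p).pow_nonneg _
  have hs0 : 0 ≤ s := zero_le_one.trans hs.1
  gcongr
  exact hs.2

lemma exists_lintegral_comp_expect_eval_le (hp : p ≠ 0) (hdeg : P.natDegree ≤ 2 * p)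
    (hcoeff : 0 < P.coeff (2 * p)) :
    ∃ A, ∃ K > 0, ∀ (ι : Type) [Fintype ι] [Nonempty ι] (μ : Measure (ι → ℝ)) [IsGaussian μ],
      (∀ i, ∫ x, x i ∂μ = 0) → ∀ k : ℝ → ℝ≥0∞, Measurable k → (∀ t ≤ A, k t = 0) →
        ∫⁻ x, k (𝔼 i, P.eval (x i)) ∂μ
          ≤ 3 * Fintype.card ι * ∫⁻ t, k t * μ {x | t / K ≤ 𝔼 i, x i ^ (2 * p)} := by
  obtain ⟨C, hC⟩ := exists_eval_sub_le_mul_eval_derivative hp hdeg hcoeff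
  obtain ⟨K, hK, hPK⟩ := exists_eval_le_mul_one_add_pow hp hdeg
  refine ⟨max (C + 2) (2 * K), 2 * K * 2 ^ (2 * p), by positivity,
    fun ι _ _ μ _ hmean k hk hk0 => ?_⟩
  have hG : Measurable fun x : ι → ℝ => K * (1 + 2 ^ (2 * p) * 𝔼 i, x i ^ (2 * p)) :=
    (((measurable_expect_pow p).const_mul _).const_add _).const_mul _
  refine (lintegral_comp_le_of_sub_le_mul_deriv hmean (continuous_expect_eval P).measurable hG
    (fun x s => (hasDerivAt_expect_eval_smul P x s).differentiableAt) (C := C) (fun x s _ => ?_)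
    (fun x s => expect_eval_smul_le hK.le hPK x) hk
    fun t ht => hk0 t (ht.trans (le_max_left _ _))).trans ?_
  · rw [(hasDerivAt_expect_eval_smul P x s).deriv, Finset.mul_expect,
      ← Fintype.expect_const (ι := ι) C, ← Finset.expect_sub_distrib]
    refine Finset.expect_le_expect fun i _ => ?_
    simpa [mul_assoc] using hC (s * x i)
  · refine mul_le_mul_right (lintegral_mono fun t => ?_) _
    rcases le_or_gt t (max (C + 2) (2 * K)) with ht | ht
    · simp [hk0 t ht]
    · refine mul_le_mul_right (measure_mono fun x hx => ?_) _
      have hx : t ≤ K * (1 + 2 ^ (2 * p) * 𝔼 i, x i ^ (2 * p)) := hx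
      rw [Set.mem_ofPred, div_le_iff₀ (by positivity)]
      linarith [(le_max_right (C + 2) (2 * K)).trans_lt ht]

end Growth

namespace IsCSG

open Polynomial
open scoped BigOperators

variable {Z : ℤ → Ω → ℝ} {r : ℤ → ℝ} {P : ℝ[X]} {p : ℕ}

lemma lintegral_comp_Qvar (hZ : IsCSG Z r) (P : ℝ[X]) {k : ℝ → ℝ≥0∞} (hk : Measurable k) (n : ℕ) :
    ∫⁻ ω, k (Qvar P.eval Z n ω) = ∫⁻ x, k (𝔼 i, P.eval (x i)) ∂vecLaw Z n := by
  simp only [Qvar_eq_expect]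
  exact (lintegral_map (hk.comp (continuous_expect_eval P).measurable) (hZ.measurable_vec n)).symm

lemma exists_eventually_vecLaw_div_le_expect_pow_le (hZ : IsCSG Z r)
    (hsum : Summable fun j => r j ^ 2) (hp : p ≠ 0) {K : ℝ} (hK : 0 < K) :
    ∃ A, ∀ c ≥ 0, ∃ C > 0, ∀ᶠ n : ℕ in atTop, ∀ t ≥ A,
      vecLaw Z n {x | t / K ≤ 𝔼 i, x i ^ (2 * p)}
        ≤ ENNReal.ofReal (C / n ^ 2) * ENNReal.ofReal (Real.exp (-(c * t ^ (p : ℝ)⁻¹))) := by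
  obtain ⟨M, hM, T₀, hT₀, htail⟩ := hZ.exists_eventually_vecLaw_expect_pow_ge_le hsum hp
  refine ⟨K * M * T₀ ^ p, fun c hc => ?_⟩
  obtain ⟨C, hC, hn⟩ := htail (c * (K * M) ^ (p : ℝ)⁻¹) (by positivity)
  refine ⟨C, hC, hn.mono fun n hn t ht => ?_⟩
  have ht0 : 0 < t := lt_of_lt_of_le (by positivity) ht
  have hpow : M * ((t / (K * M)) ^ (p : ℝ)⁻¹) ^ p = t / K := by
    rw [Real.rpow_inv_natCast_pow (by positivity) hp]
    field_simp
  have hT : T₀ ≤ (t / (K * M)) ^ (p : ℝ)⁻¹ := by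
    rw [Real.le_rpow_inv_iff_of_pos hT₀.le (by positivity) (by positivity), Real.rpow_natCast,
      le_div_iff₀ (by positivity)]
    linarith
  have hexp : c * (K * M) ^ (p : ℝ)⁻¹ * (t / (K * M)) ^ (p : ℝ)⁻¹ = c * t ^ (p : ℝ)⁻¹ := by
    rw [mul_assoc, ← Real.mul_rpow (by positivity) (by positivity),
      mul_div_cancel₀ _ (by positivity)]
  rw [← hpow, ← hexp, ← ENNReal.ofReal_mul (by positivity)]
  exact hn _ hT

lemma exists_eventually_lintegral_comp_Qvar_le (hZ : IsCSG Z r)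
    (hsum : Summable fun j => r j ^ 2) (hp : p ≠ 0) (hdeg : P.natDegree ≤ 2 * p)
    (hcoeff : 0 < P.coeff (2 * p)) :
    ∃ A, ∀ c ≥ 0, ∃ C > 0, ∀ᶠ n : ℕ in atTop, ∀ k : ℝ → ℝ≥0∞, Measurable k →
      (∀ t ≤ A, k t = 0) → ∫⁻ ω, k (Qvar P.eval Z n ω)
        ≤ ENNReal.ofReal (C / n)
          * ∫⁻ t, k t * ENNReal.ofReal (Real.exp (-(c * t ^ (p : ℝ)⁻¹))) := by
  obtain ⟨A₁, K, hK, hlayer⟩ := exists_lintegral_comp_expect_eval_le hp hdeg hcoeff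
  obtain ⟨A₂, htail⟩ := hZ.exists_eventually_vecLaw_div_le_expect_pow_le hsum hp hK
  refine ⟨max A₁ A₂, fun c hc => ?_⟩
  obtain ⟨C, hC, hn⟩ := htail c hc
  refine ⟨3 * C, by positivity, ?_⟩
  filter_upwards [hn, eventually_ge_atTop 1] with n hn hn1 k hk hk0
  have := hZ.isGaussian_vecLaw n
  have : Nonempty (Fin n) := ⟨⟨0, hn1⟩⟩
  calc _ = ∫⁻ x, k (𝔼 i, P.eval (x i)) ∂vecLaw Z n := hZ.lintegral_comp_Qvar P hk n
    _ ≤ 3 * n * ∫⁻ t, k t * vecLaw Z n {x | t / K ≤ 𝔼 i, x i ^ (2 * p)} := by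
        simpa using hlayer (Fin n) _ (hZ.integral_vecLaw_eval n) k hk fun t ht =>
          hk0 t (ht.trans (le_max_left _ _))
    _ ≤ 3 * n * (ENNReal.ofReal (C / n ^ 2)
          * ∫⁻ t, k t * ENNReal.ofReal (Real.exp (-(c * t ^ (p : ℝ)⁻¹)))) := by
        rw [← lintegral_const_mul' _ _ ENNReal.ofReal_ne_top]
        refine mul_le_mul_right (lintegral_mono fun t => ?_) _
        rcases le_or_gt t (max A₁ A₂) with ht | ht
        · simp [hk0 t ht]
        · rw [mul_left_comm]
          exact mul_le_mul_right (hn t ((le_max_right _ _).trans ht.le)) _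
    _ = _ := by
        rw [← mul_assoc, ← ENNReal.ofReal_natCast, ← ENNReal.ofReal_ofNat, ← ENNReal.ofReal_mul,
          ← ENNReal.ofReal_mul]
        · congr 2
          field_simp
        all_goals positivity

end IsCSG

section LowerBound

open Polynomial
open scoped BigOperators Matrix

variable {P : ℝ[X]} {p : ℕ}

lemma exists_derivative_eval_mul_exp_le (hp : p ≠ 0) (hdeg : P.natDegree ≤ 2 * p)
    (hcoeff : 0 < P.coeff (2 * p)) :
    ∃ c ≥ 0, ∀ᶠ x in atTop, 0 ≤ P.derivative.eval x ∧
      P.derivative.eval x * Real.exp (-(c * P.eval x ^ (p : ℝ)⁻¹)) ≤ gaussianPDFReal 0 1 x := by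
  obtain ⟨C₀, hC₀⟩ := exists_eval_sub_le_mul_eval_derivative hp hdeg hcoeff
  set a := P.coeff (2 * p) / 2 with ha
  have ha0 : 0 < a := half_pos hcoeff
  have hlarge : Tendsto (P - C a * X ^ (2 * p)).eval atTop atTop := by
    refine tendsto_eval_atTop (m := 2 * p) (by lia)
      ((natDegree_sub_le_of_le hdeg (natDegree_C_mul_X_pow_le _ _)).trans (max_self _).le) ?_
    rw [coeff_sub, coeff_C_mul, coeff_X_pow_self]
    linarith
  have hsmall : ∀ᶠ x in atTop, P.derivative.eval x / Real.exp x ≤ (√(2 * Real.pi))⁻¹ :=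
    (tendsto_div_exp_atTop _).eventually_le_const (by positivity)
  refine ⟨(a ^ (p : ℝ)⁻¹)⁻¹, by positivity, ?_⟩
  filter_upwards [hlarge.eventually_ge_atTop 0, hsmall, eventually_ge_atTop 2,
    (tendsto_eval_atTop (by lia) hdeg hcoeff).eventually_ge_atTop C₀] with x hx hsmall hx2 hxC
  have hderiv : 0 ≤ P.derivative.eval x :=
    nonneg_of_mul_nonneg_right (by linarith [hC₀ x] : 0 ≤ x * P.derivative.eval x) (by linarith)
  have hsq : x ^ 2 ≤ (a ^ (p : ℝ)⁻¹)⁻¹ * P.eval x ^ (p : ℝ)⁻¹ := by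
    simp only [eval_sub, eval_mul, eval_C, eval_pow, eval_X, sub_nonneg] at hx
    rw [← div_eq_inv_mul, le_div_iff₀ (by positivity)]
    calc x ^ 2 * a ^ (p : ℝ)⁻¹ = (a * x ^ (2 * p)) ^ (p : ℝ)⁻¹ := by
          rw [Real.mul_rpow ha0.le (by positivity), pow_mul,
            Real.pow_rpow_inv_natCast (sq_nonneg x) hp, mul_comm]
      _ ≤ P.eval x ^ (p : ℝ)⁻¹ := by gcongr
  refine ⟨hderiv, ?_⟩
  calc _ ≤ P.derivative.eval x * Real.exp (-x + -(x ^ 2 / 2)) := by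
        gcongr
        nlinarith
    _ = P.derivative.eval x / Real.exp x * Real.exp (-(x ^ 2 / 2)) := by
        rw [Real.exp_add, Real.exp_neg x]
        ring
    _ ≤ (√(2 * Real.pi))⁻¹ * Real.exp (-(x ^ 2 / 2)) := by gcongr
    _ = gaussianPDFReal 0 1 x := by simp [gaussianPDFReal, neg_div]

lemma exists_lintegral_mul_exp_ne_top_of_comp_eval (hp : p ≠ 0) (hdeg : P.natDegree ≤ 2 * p)
    (hcoeff : 0 < P.coeff (2 * p)) {k : ℝ → ℝ≥0∞} (hk : ∫⁻ x, k (P.eval x) ∂gaussianReal 0 1 ≠ ∞) :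
    ∃ A, ∃ c ≥ 0,
      ∫⁻ t in Set.Ici A, k t * ENNReal.ofReal (Real.exp (-(c * t ^ (p : ℝ)⁻¹))) ≠ ∞ := by
  obtain ⟨c, hc, hev⟩ := exists_derivative_eval_mul_exp_le hp hdeg hcoeff
  obtain ⟨x₀, hx₀⟩ := eventually_atTop.1 hev
  have hmono : MonotoneOn P.eval (Set.Ici x₀) :=
    monotoneOn_of_deriv_nonneg (convex_Ici x₀) P.continuousOn P.differentiable.differentiableOn
      fun x hx => by
        rw [Polynomial.deriv]
        exact (hx₀ x (interior_subset hx)).1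
  have himage : Set.Ici (P.eval x₀) ⊆ P.eval '' Set.Ici x₀ := by
    intro t ht
    obtain ⟨y, hty, hy⟩ := ((tendsto_eval_atTop (by lia) hdeg hcoeff).eventually_ge_atTop t |>.and
      (eventually_ge_atTop x₀)).exists
    exact Set.image_mono Set.Icc_subset_Ici_self
      (intermediate_value_Icc hy P.continuousOn ⟨ht, hty⟩)
  refine ⟨P.eval x₀, c, hc, ne_top_of_le_ne_top hk ?_⟩
  calc _ ≤ ∫⁻ t in P.eval '' Set.Ici x₀, k t * ENNReal.ofReal (Real.exp (-(c * t ^ (p : ℝ)⁻¹))) :=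
        lintegral_mono_set himage
    _ = ∫⁻ x in Set.Ici x₀, ENNReal.ofReal (P.derivative.eval x)
          * (k (P.eval x) * ENNReal.ofReal (Real.exp (-(c * P.eval x ^ (p : ℝ)⁻¹)))) :=
        lintegral_image_eq_lintegral_deriv_mul_of_monotoneOn measurableSet_Ici
          (fun x _ => (P.hasDerivAt x).hasDerivWithinAt) hmono _
    _ ≤ ∫⁻ x in Set.Ici x₀, gaussianPDF 0 1 x * k (P.eval x) := by
        refine setLIntegral_mono' measurableSet_Ici fun x hx => ?_
        rw [mul_left_comm, mul_comm, ← ENNReal.ofReal_mul (hx₀ x hx).1]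
        exact mul_le_mul_left (ENNReal.ofReal_le_ofReal (hx₀ x hx).2) _
    _ ≤ ∫⁻ x, k (P.eval x) ∂gaussianReal 0 1 := by
        rw [gaussianReal_of_var_ne_zero 0 one_ne_zero,
          lintegral_withDensity_eq_lintegral_mul_non_measurable _ (measurable_gaussianPDF 0 1)
            (.of_forall fun _ => gaussianPDF_lt_top)]
        exact setLIntegral_le_lintegral _ _

lemma exists_lintegral_update_ne_top {ι : Type*} [Fintype ι] [DecidableEq ι] {X : ι → Type*}
    [∀ i, MeasurableSpace (X i)] (μ : ∀ i, Measure (X i)) [∀ i, IsProbabilityMeasure (μ i)]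
    {f : (∀ i, X i) → ℝ≥0∞} (hf : Measurable f) (hint : ∫⁻ x, f x ∂Measure.pi μ ≠ ∞) (j : ι) :
    ∃ x, ∫⁻ t, f (Function.update x j t) ∂μ j ≠ ∞ := by
  by_contra! htop
  obtain ⟨x⟩ : Nonempty (∀ i, X i) := (Measure.pi μ).nonempty_of_neZero
  rw [lintegral_eq_lmarginal_univ x, lmarginal_erase' f hf (Finset.mem_univ j)] at hint
  simp [lmarginal, htop] at hint

variable {ι : Type*} [Fintype ι]

lemma mulVec_update_apply {m n : Type*} [Fintype n] [DecidableEq n] (B : Matrix m n ℝ)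
    (x : n → ℝ) (j : n) (t : ℝ) (i : m) :
    (B *ᵥ Function.update x j t) i = B i j * t + ((B *ᵥ x) i - B i j * x j) := by
  have : Function.update x j t = x + Pi.single j (t - x j) := by
    ext l
    rcases eq_or_ne l j with rfl | hl <;> simp [*]
  rw [this, Matrix.mulVec_add, Pi.add_apply, Matrix.mulVec_single]
  simp
  ring

/-- The mean of the polynomials `x ↦ P (b i * x + a i)`. -/
def expectCompLinear (P : ℝ[X]) (b a : ι → ℝ) : ℝ[X] :=
  C (Fintype.card ι : ℝ)⁻¹ * ∑ i, (taylor (a i) P).comp (C (b i) * X)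

lemma eval_expectCompLinear (P : ℝ[X]) (b a : ι → ℝ) (x : ℝ) :
    (expectCompLinear P b a).eval x = 𝔼 i, P.eval (b i * x + a i) := by
  simp [expectCompLinear, eval_finsetSum, Fintype.expect_eq_sum_div_card, div_eq_inv_mul,
    taylor_eval]

lemma natDegree_expectCompLinear_le (P : ℝ[X]) (b a : ι → ℝ) :
    (expectCompLinear P b a).natDegree ≤ P.natDegree := by
  refine (natDegree_C_mul_le _ _).trans (natDegree_sum_le_of_forall_le _ _ fun i _ => ?_)
  refine natDegree_comp_le.trans ?_
  rw [natDegree_taylor]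
  exact (Nat.mul_le_mul_left _ ((natDegree_C_mul_le _ _).trans natDegree_X_le)).trans (mul_one _).le

lemma coeff_expectCompLinear (P : ℝ[X]) (b a : ι → ℝ) :
    (expectCompLinear P b a).coeff P.natDegree = P.leadingCoeff * 𝔼 i, b i ^ P.natDegree := by
  simp [expectCompLinear, Fintype.expect_eq_sum_div_card, comp_C_mul_X_coeff,
    coeff_taylor_natDegree, Finset.mul_sum, div_eq_inv_mul, mul_left_comm]

lemma exists_lintegral_mul_exp_ne_top_of_comp_expect_eval [Nonempty ι]
    {μ : Measure (ι → ℝ)} [IsGaussian μ] (hmean : ∀ i, ∫ x, x i ∂μ = 0)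
    (hμ : μ ≠ Measure.dirac 0) (hp : p ≠ 0) (hdeg : P.natDegree ≤ 2 * p)
    (hcoeff : 0 < P.coeff (2 * p)) {k : ℝ → ℝ≥0∞} (hk : Measurable k)
    (hint : ∫⁻ x, k (𝔼 i, P.eval (x i)) ∂μ ≠ ∞) :
    ∃ A, ∃ c ≥ 0,
      ∫⁻ t in Set.Ici A, k t * ENNReal.ofReal (Real.exp (-(c * t ^ (p : ℝ)⁻¹))) ≠ ∞ := by
  classical
  have hdeg' : P.natDegree = 2 * p := natDegree_eq_of_le_of_coeff_ne_zero hdeg hcoeff.ne'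
  obtain ⟨B, hB⟩ := exists_eq_map_mulVec_pi_gaussianReal μ hmean
  obtain ⟨i, j, hij⟩ : ∃ i j, B i j ≠ 0 := by
    by_contra! h0
    have : B = 0 := Matrix.ext h0
    have hzero : B.mulVec = fun _ => 0 := funext fun x => by simp [this]
    exact hμ (by rw [hB, hzero, Measure.map_const, measure_univ, one_smul])
  have hmeas : Measurable fun x : ι → ℝ => k (𝔼 i, P.eval (x i)) :=
    hk.comp (continuous_expect_eval P).measurable
  have hB' : Measurable B.mulVec := by fun_prop
  rw [hB, lintegral_map hmeas hB'] at hint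
  obtain ⟨x, hx⟩ := exists_lintegral_update_ne_top _ (hmeas.comp hB') hint j
  simp only [Function.comp_apply, mulVec_update_apply, ← eval_expectCompLinear] at hx
  refine exists_lintegral_mul_exp_ne_top_of_comp_eval hp
    ((natDegree_expectCompLinear_le ..).trans hdeg) ?_ hx
  rw [← hdeg', coeff_expectCompLinear, leadingCoeff, hdeg']
  exact mul_pos hcoeff (Finset.expect_pos' (fun l _ => (even_two_mul p).pow_nonneg _)
    ⟨i, Finset.mem_univ i, (even_two_mul p).pow_pos hij⟩)

end LowerBound

namespace IsCSG

open Polynomial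
open scoped BigOperators

variable {Z : ℤ → Ω → ℝ} {r : ℤ → ℝ} {P : ℝ[X]} {p : ℕ}

lemma vecLaw_ne_dirac_zero (hZ : IsCSG Z r) {n : ℕ} [NeZero n] : vecLaw Z n ≠ Measure.dirac 0 := by
  intro hdirac
  have hcoord : gaussianReal 0 (r 0).toNNReal = Measure.dirac 0 := by
    rw [← hZ.map_eq_gaussianReal 0]
    simpa [vecLaw, Measure.map_map, hZ.measurable_vec n, Function.comp_def, measurable_pi_apply,
      Measure.map_dirac] using congrArg (Measure.map fun x => x 0) hdirac
  have := nullSingletonClass_gaussianReal (μ := 0) (Real.toNNReal_pos.2 hZ.2.2.2).ne'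
  simpa using (congrArg (· {(0 : ℝ)}) hcoord).symm.trans (measure_singleton 0)

lemma exists_eventually_setLIntegral_comp_Qvar_le (hZ : IsCSG Z r)
    (hsum : Summable fun j => r j ^ 2) (hp : p ≠ 0) (hdeg : P.natDegree ≤ 2 * p)
    (hcoeff : 0 < P.coeff (2 * p)) {k : ℝ → ℝ≥0∞} (hk : Measurable k) {n₀ : ℕ} (hn₀ : n₀ ≠ 0)
    (hint : ∫⁻ ω, k (Qvar P.eval Z n₀ ω) ≠ ∞) :
    ∃ A, ∃ K ≥ 0, ∀ᶠ n : ℕ in atTop,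
      ∫⁻ ω in {ω | A < Qvar P.eval Z n ω}, k (Qvar P.eval Z n ω) ≤ ENNReal.ofReal (K / n) := by
  have := hZ.isGaussian_vecLaw n₀
  have : NeZero n₀ := ⟨hn₀⟩
  rw [hZ.lintegral_comp_Qvar P hk] at hint
  obtain ⟨A₁, c, hc, hfin⟩ := exists_lintegral_mul_exp_ne_top_of_comp_expect_eval
    (hZ.integral_vecLaw_eval n₀) hZ.vecLaw_ne_dirac_zero hp hdeg hcoeff hk hint
  obtain ⟨A₂, hupper⟩ := hZ.exists_eventually_lintegral_comp_Qvar_le hsum hp hdeg hcoeff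
  obtain ⟨C, hC, hn⟩ := hupper c hc
  set L := ∫⁻ t in Set.Ici A₁, k t * ENNReal.ofReal (Real.exp (-(c * t ^ (p : ℝ)⁻¹)))
  refine ⟨max A₁ A₂, C * L.toReal, by positivity, hn.mono fun n hn => ?_⟩
  set k' := (Set.Ioi (max A₁ A₂)).indicator k
  have hQ : MeasurableSet {ω | max A₁ A₂ < Qvar P.eval Z n ω} := measurableSet_lt measurable_const
    (hZ.measurable_Qvar P.continuous.measurable n)
  calc _ = ∫⁻ ω, k' (Qvar P.eval Z n ω) := (lintegral_indicator hQ _).symm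
    _ ≤ ENNReal.ofReal (C / n)
          * ∫⁻ t, k' t * ENNReal.ofReal (Real.exp (-(c * t ^ (p : ℝ)⁻¹))) :=
        hn k' (hk.indicator measurableSet_Ioi) fun t ht =>
          Set.indicator_of_notMem (fun h => h.not_ge (ht.trans (le_max_right _ _))) _
    _ ≤ ENNReal.ofReal (C / n) * L := by
        refine mul_le_mul_right ?_ _
        refine le_trans (lintegral_mono fun t => ?_) (lintegral_indicator measurableSet_Ici _).le
        rw [Set.indicator_mul_left]
        have hmono : k' t ≤ (Set.Ici A₁).indicator k t := Set.indicator_le_indicator_of_subset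
          (Set.Ioi_subset_Ici (le_max_left _ _)) (fun _ => bot_le) t
        exact mul_le_mul_left hmono _
    _ = _ := by
        rw [mul_div_right_comm, ENNReal.ofReal_mul (by positivity), ENNReal.ofReal_toReal hfin]

end IsCSG

/-- The remainder of the first-order Taylor expansion of `g` at `θ`. -/
def taylorRemainder (g : ℝ → ℝ) (θ t : ℝ) : ℝ := g t - g θ - deriv g θ * (t - θ)

lemma continuous_taylorRemainder {g : ℝ → ℝ} (hg : Continuous g) (θ : ℝ) :
    Continuous (taylorRemainder g θ) := by
  unfold taylorRemainder
  fun_prop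

namespace IsCSG

open Polynomial
open scoped BigOperators

variable {Z : ℤ → Ω → ℝ} {r : ℤ → ℝ} {P : ℝ[X]} {p : ℕ} {g : ℝ → ℝ}

lemma lintegral_sq_enorm_Qvar_sub_lamE (hZ : IsCSG Z r) {f : ℝ → ℝ} {K : ℝ} {N : ℕ}
    (hf : EvenWithGrowth f K N) {n : ℕ} (hn : 1 ≤ n) :
    ∫⁻ ω, ‖Qvar f Z n ω - lamE f Z‖ₑ ^ 2 = ENNReal.ofReal (varU f Z n / n) := by
  have := hZ.isProbabilityMeasure
  rw [← hZ.variance_Qvar hf hn, ofReal_variance (hZ.memLp_two_Qvar hf n), evariance,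
    hZ.integral_Qvar hf hn]

lemma exists_setLIntegral_taylorRemainder_Qvar_le (hZ : IsCSG Z r)
    (hsum : Summable fun j => r j ^ 2) (heven : ∀ x, P.eval (-x) = P.eval x) {B : ℝ}
    (hB : ∀ x, B ≤ P.eval x) (hg : ContDiff ℝ 2 g) (A : ℝ) :
    ∃ K ≥ 0, ∀ n ≥ 1, ∫⁻ ω in {ω | A < Qvar P.eval Z n ω}ᶜ,
      ‖taylorRemainder g (lamE P.eval Z) (Qvar P.eval Z n ω)‖ₑ ≤ ENNReal.ofReal (K / n) := by
  obtain ⟨_, _, hf⟩ := exists_evenWithGrowth_eval heven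
  obtain ⟨V, hV, hVn⟩ := hZ.exists_varU_le hsum hf
  set θ := lamE P.eval Z
  obtain ⟨L, hL⟩ := (isCompact_Icc (a := min B θ) (b := max A θ)).exists_bound_of_continuousOn
    (hg.deriv'.continuous_deriv le_rfl).continuousOn
  have hL0 : 0 ≤ L := (norm_nonneg _).trans (hL θ ⟨min_le_right _ _, le_max_right _ _⟩)
  refine ⟨L * V, by positivity, fun n hn => ?_⟩
  have : Nonempty (Fin n) := ⟨⟨0, hn⟩⟩
  have hrem (ω : Ω) (hω : ω ∈ {ω | A < Qvar P.eval Z n ω}ᶜ) :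
      ‖taylorRemainder g θ (Qvar P.eval Z n ω)‖ₑ
        ≤ ENNReal.ofReal L * ‖Qvar P.eval Z n ω - θ‖ₑ ^ 2 := by
    have hQ : Qvar P.eval Z n ω ∈ Set.Icc (min B θ) (max A θ) := by
      refine ⟨(min_le_left _ _).trans ?_, (not_lt.1 fun h => hω h).trans (le_max_left _ _)⟩
      rw [Qvar_eq_expect]
      exact Finset.le_expect Finset.univ_nonempty fun i _ => hB _
    rw [Real.enorm_eq_ofReal_abs, Real.enorm_eq_ofReal_abs, ← ENNReal.ofReal_pow (abs_nonneg _),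
      ← ENNReal.ofReal_mul hL0, sq_abs]
    exact ENNReal.ofReal_le_ofReal (abs_sub_sub_deriv_mul_le hg fun t ht =>
      hL t (Set.uIcc_subset_Icc ⟨min_le_right _ _, le_max_right _ _⟩ hQ ht))
  calc _ ≤ ∫⁻ ω in {ω | A < Qvar P.eval Z n ω}ᶜ,
          ENNReal.ofReal L * ‖Qvar P.eval Z n ω - θ‖ₑ ^ 2 :=
        setLIntegral_mono' (measurableSet_lt measurable_const
          (hZ.measurable_Qvar P.continuous.measurable n)).compl hrem
    _ ≤ ENNReal.ofReal L * ∫⁻ ω, ‖Qvar P.eval Z n ω - θ‖ₑ ^ 2 :=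
        (setLIntegral_le_lintegral _ _).trans (lintegral_const_mul' _ _ ENNReal.ofReal_ne_top).le
    _ = ENNReal.ofReal (L * varU P.eval Z n / n) := by
        rw [hZ.lintegral_sq_enorm_Qvar_sub_lamE hf hn, ← ENNReal.ofReal_mul hL0, mul_div_assoc]
    _ ≤ ENNReal.ofReal (L * V / n) := by
        gcongr
        exact hVn n hn

lemma exists_integral_abs_taylorRemainder_Qvar_le (hZ : IsCSG Z r)
    (hsum : Summable fun j => r j ^ 2) (heven : ∀ x, P.eval (-x) = P.eval x) (hp : p ≠ 0)
    (hdeg : P.natDegree ≤ 2 * p) (hcoeff : 0 < P.coeff (2 * p)) (hg : ContDiff ℝ 2 g) :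
    ∃ K > 0, ∀ n ≥ 1, ∫ ω, |taylorRemainder g (lamE P.eval Z) (Qvar P.eval Z n ω)| ≤ K / n := by
  set ρ := taylorRemainder g (lamE P.eval Z)
  have hρ : Continuous ρ := continuous_taylorRemainder hg.continuous _
  -- One finite expectation controls the growth of `g`. If there is none, all integrals are `0` by
  -- convention.
  by_cases! hint : ∃ n₀ ≥ 1, Integrable fun ω => |ρ (Qvar P.eval Z n₀ ω)|
  swap
  · refine ⟨1, one_pos, fun n hn => ?_⟩
    rw [integral_undef (hint n hn)]
    positivity
  obtain ⟨n₀, hn₀, hint⟩ := hint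
  obtain ⟨B, hB⟩ := exists_forall_le_eval hp hdeg hcoeff
  obtain ⟨A, K₁, hK₁, hfar⟩ := hZ.exists_eventually_setLIntegral_comp_Qvar_le hsum hp hdeg hcoeff
    hρ.enorm.measurable (Nat.one_le_iff_ne_zero.1 hn₀) (by simpa using hint.2.ne)
  obtain ⟨K₂, hK₂, hnear⟩ := hZ.exists_setLIntegral_taylorRemainder_Qvar_le hsum heven hB hg A
  have hO : (fun n : ℕ => ∫ ω, |ρ (Qvar P.eval Z n ω)|) =O[atTop] fun n : ℕ => (n : ℝ)⁻¹ := by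
    refine .of_bound (K₁ + K₂) ?_
    filter_upwards [hfar, eventually_ge_atTop 1] with n hfar hn
    have hQ : Measurable (Qvar P.eval Z n) := hZ.measurable_Qvar P.continuous.measurable n
    rw [Real.norm_of_nonneg (integral_nonneg fun _ => abs_nonneg _),
      Real.norm_of_nonneg (by positivity), ← div_eq_mul_inv]
    simp only [← Real.norm_eq_abs]
    have hρQ : Measurable fun ω => ρ (Qvar P.eval Z n ω) := hρ.measurable.comp hQ
    rw [integral_norm_eq_lintegral_enorm hρQ.aestronglyMeasurable,
      ← lintegral_add_compl _ (measurableSet_lt (measurable_const (a := A)) hQ), add_div]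
    refine ENNReal.toReal_le_of_le_ofReal (by positivity) ?_
    rw [ENNReal.ofReal_add (by positivity) (by positivity)]
    exact add_le_add hfar (hnear n hn)
  obtain ⟨K, hK, hbound⟩ := Asymptotics.bound_of_isBigO_nat_atTop hO
  refine ⟨K, hK, fun n hn => ?_⟩
  have hn' : (n : ℝ)⁻¹ ≠ 0 := by positivity
  simpa [div_eq_mul_inv] using (le_abs_self _).trans (hbound hn')

end IsCSG

/-! ### Transfer through a smooth function -/

section HermitePolynomial

open Polynomial
open scoped BigOperators

variable {r₀ : ℝ} {d : ℕ → ℝ} {q : ℕ}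

/-- The function `fpoly r₀ d q` as an element of `ℝ[X]`, which gives access to its degree and its
coefficients. -/
def fpolyPolynomial (r₀ : ℝ) (d : ℕ → ℝ) (q : ℕ) : ℝ[X] :=
  ∑ k ∈ Finset.range (q / 2 + 1),
    C (d (2 * k)) * ((hermite (2 * k)).map (Int.castRingHom ℝ)).comp (C (√r₀)⁻¹ * X)

lemma eval_fpolyPolynomial (r₀ : ℝ) (d : ℕ → ℝ) (q : ℕ) (x : ℝ) :
    (fpolyPolynomial r₀ d q).eval x = fpoly r₀ d q x := by
  simp only [fpolyPolynomial, fpoly, hermiteFun, eval_finsetSum, eval_mul, eval_C, eval_comp,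
    eval_X, eval_map, aeval_def, div_eq_inv_mul]
  rfl

lemma hermiteFun_two_mul_neg (k : ℕ) (x : ℝ) : hermiteFun (2 * k) (-x) = hermiteFun (2 * k) x := by
  simp only [hermiteFun, aeval_eq_sum_range]
  refine Finset.sum_congr rfl fun j _ => ?_
  rcases j.even_or_odd with hj | hj
  · rw [hj.neg_pow]
  · rw [coeff_hermite_of_odd_add ((even_two_mul k).add_odd hj), zero_smul, zero_smul]

lemma eval_neg_fpolyPolynomial (r₀ : ℝ) (d : ℕ → ℝ) (q : ℕ) (x : ℝ) :
    (fpolyPolynomial r₀ d q).eval (-x) = (fpolyPolynomial r₀ d q).eval x := by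
  simp only [eval_fpolyPolynomial, fpoly, neg_div, hermiteFun_two_mul_neg]

lemma coeff_fpolyPolynomial (r₀ : ℝ) (d : ℕ → ℝ) (q j : ℕ) :
    (fpolyPolynomial r₀ d q).coeff j =
      ∑ k ∈ Finset.range (q / 2 + 1), d (2 * k) * ((hermite (2 * k)).coeff j * (√r₀)⁻¹ ^ j) := by
  simp [fpolyPolynomial, comp_C_mul_X_coeff]

lemma natDegree_fpolyPolynomial_le (r₀ : ℝ) (d : ℕ → ℝ) (q : ℕ) :
    (fpolyPolynomial r₀ d q).natDegree ≤ 2 * (q / 2) := by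
  refine natDegree_le_iff_coeff_eq_zero.2 fun j hj => ?_
  rw [coeff_fpolyPolynomial]
  refine Finset.sum_eq_zero fun k hk => ?_
  have hkj : 2 * k < j := by
    have := Finset.mem_range.1 hk
    lia
  simp [coeff_hermite_of_lt hkj]

lemma coeff_fpolyPolynomial_two_mul_half (r₀ : ℝ) (d : ℕ → ℝ) (q : ℕ) :
    (fpolyPolynomial r₀ d q).coeff (2 * (q / 2)) = d (2 * (q / 2)) * (√r₀)⁻¹ ^ (2 * (q / 2)) := by
  rw [coeff_fpolyPolynomial, Finset.sum_range_succ, Finset.sum_eq_zero fun k hk => ?_,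
    coeff_hermite_self, Int.cast_one, one_mul, zero_add]
  have hk' : 2 * k < 2 * (q / 2) := by
    have := Finset.mem_range.1 hk
    lia
  simp [coeff_hermite_of_lt hk']

lemma coeff_fpolyPolynomial_pos (hr : 0 < r₀) (hq : q % 2 = 0) (hd : d q = r₀ ^ (q / 2)) :
    0 < (fpolyPolynomial r₀ d q).coeff (2 * (q / 2)) := by
  rw [coeff_fpolyPolynomial_two_mul_half, Nat.mul_div_cancel' (Nat.dvd_of_mod_eq_zero hq), hd]
  positivity

end HermitePolynomial

/-- The statistic `√n (g(θ̂) - g(θ)) / (g'(θ) s)`, for the estimator `θ̂ = Q_{f,n}(Z)` of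
`θ = λ_f(Z)` and the standard deviation `s` of `U_{f,n}(Z)`. -/
def transformedStat (g f : ℝ → ℝ) (Z : ℤ → Ω → ℝ) (n : ℕ) (ω : Ω) : ℝ :=
  √n * (g (Qvar f Z n ω) - g (lamE f Z)) / (deriv g (lamE f Z) * √(varU f Z n))

lemma transformedStat_sub_Fstat {g f : ℝ → ℝ} {Z : ℤ → Ω → ℝ} (hg' : deriv g (lamE f Z) ≠ 0)
    (n : ℕ) (ω : Ω) :
    transformedStat g f Z n ω - Fstat f Z n ω = √n / (deriv g (lamE f Z) * √(varU f Z n))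
      * taylorRemainder g (lamE f Z) (Qvar f Z n ω) := by
  rw [transformedStat, Fstat, Ustat, taylorRemainder, ← mul_div_mul_left _ √(varU f Z n) hg']
  ring

namespace IsCSG

open Polynomial

variable {Z : ℤ → Ω → ℝ} {r : ℤ → ℝ} {P : ℝ[X]} {p : ℕ} {g f : ℝ → ℝ} {K V : ℝ} {N n : ℕ}

lemma integrable_Fstat (hZ : IsCSG Z r) (hf : EvenWithGrowth f K N) (n : ℕ) :
    Integrable (Fstat f Z n) := by
  have := hZ.isProbabilityMeasure
  exact ((((hZ.memLp_two_Qvar hf n).integrable one_le_two).sub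
    (integrable_const _)).const_mul _).div_const _

lemma dW_map_transformedStat_le (hZ : IsCSG Z r) (hf : EvenWithGrowth f K N)
    (hg : Measurable g) (n : ℕ) :
    dW (Measure.map (transformedStat g f Z n) ℙ) (gaussianReal 0 1) ≤
      (∫ ω, |transformedStat g f Z n ω - Fstat f Z n ω|)
        + dW (Measure.map (Fstat f Z n) ℙ) (gaussianReal 0 1) := by
  have := hZ.isProbabilityMeasure
  have hN : Integrable (fun x => x) (gaussianReal 0 1) :=
    (memLp_id_gaussianReal 1).integrable le_rfl
  have hmeas : Measurable (transformedStat g f Z n) :=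
    (((hg.comp (hZ.measurable_Qvar hf.contDiff.continuous.measurable n)).sub_const _).const_mul
      _).div_const _
  by_cases hint : Integrable (transformedStat g f Z n)
  · exact dW_map_le_integral_abs_sub_add hN hint (hZ.integrable_Fstat hf n)
  · have := Measure.isProbabilityMeasure_map (μ := ℙ) hmeas.aemeasurable
    rw [dW_eq_zero_of_not_integrable (mt (integrable_map_measure aestronglyMeasurable_id
      hmeas.aemeasurable).1 hint) hN]
    exact add_nonneg (integral_nonneg fun _ => abs_nonneg _) (dW_nonneg _ _)

lemma integral_abs_transformedStat_sub_Fstat_le (hZ : IsCSG Z r) (hf : EvenWithGrowth f K N)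
    (hg' : deriv g (lamE f Z) ≠ 0) (hn : 1 ≤ n) (hvar : 0 < varU f Z 1)
    (hrem : ∫ ω, |taylorRemainder g (lamE f Z) (Qvar f Z n ω)| ≤ V / n) :
    ∫ ω, |transformedStat g f Z n ω - Fstat f Z n ω|
      ≤ V / (|deriv g (lamE f Z)| * √(varU f Z 1)) / √n := by
  have : 0 ≤ V / n := (integral_nonneg fun _ => abs_nonneg _).trans hrem
  have : 0 < |deriv g (lamE f Z)| := abs_pos.2 hg'
  have hsq : (n : ℝ) = √n * √n := (Real.mul_self_sqrt n.cast_nonneg).symm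
  simp only [transformedStat_sub_Fstat hg', abs_mul, abs_div, abs_of_nonneg (Real.sqrt_nonneg _),
    integral_const_mul]
  calc _ ≤ √n / (|deriv g (lamE f Z)| * √(varU f Z 1)) * (V / n) := by
        gcongr
        exact hZ.varU_one_le hf hn
    _ = _ := by
        have hn' : √(n : ℝ) ≠ 0 := by positivity
        rw [show V / (n : ℝ) = V / (√n * √n) by rw [← hsq]]
        field_simp

end IsCSG

theorem statement_14_general {Z : ℤ → Ω → ℝ} {r : ℤ → ℝ} (hZ : IsCSG Z r) {P : Polynomial ℝ}
    {p : ℕ} (heven : ∀ x, P.eval (-x) = P.eval x) (hp : p ≠ 0) (hdeg : P.natDegree ≤ 2 * p)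
    (hcoeff : 0 < P.coeff (2 * p)) (hsum : Summable fun j => r j ^ 2)
    (hvar : 0 < varU P.eval Z 1) {g : ℝ → ℝ} (hg : ContDiff ℝ 2 g)
    (hg' : deriv g (lamE P.eval Z) ≠ 0) {φ : ℕ → ℝ}
    (hφ : ∀ n ≥ 1, dW (Measure.map (Fstat P.eval Z n) ℙ) (gaussianReal 0 1) ≤ φ n) :
    ∃ C > 0, ∀ n ≥ 1,
      dW (Measure.map (transformedStat g P.eval Z n) ℙ) (gaussianReal 0 1) ≤ C / √n + φ n := by
  obtain ⟨_, _, hf⟩ := exists_evenWithGrowth_eval heven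
  obtain ⟨K, hK, hrem⟩ :=
    hZ.exists_integral_abs_taylorRemainder_Qvar_le hsum heven hp hdeg hcoeff hg
  refine ⟨K / (|deriv g (lamE P.eval Z)| * √(varU P.eval Z 1)), by positivity, fun n hn => ?_⟩
  calc _ ≤ _ := hZ.dW_map_transformedStat_le hf hg.continuous.measurable n
    _ ≤ _ := add_le_add
        (hZ.integral_abs_transformedStat_sub_Fstat_le hf hg' hn hvar (hrem n hn)) (hφ n hn)

/-- transfer of Berry–Esséen-type Wasserstein bounds through a
smooth reparametrization `g`. -/
theorem statement_14
    {Ω : Type*} [MeasureSpace Ω] [IsProbabilityMeasure (ℙ : Measure Ω)]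
    (Z : ℤ → Ω → ℝ) (r : ℤ → ℝ) (hZ : IsCSG Z r)
    (q : ℕ) (hq : 0 < q) (hqe : q % 2 = 0)
    (d : ℕ → ℝ) (hd : d q = r 0 ^ (q / 2))
    (hsum : Summable fun j : ℤ => (r j) ^ 2)
    (hvar : ∀ n : ℕ, 1 ≤ n → 0 < varU (fpoly (r 0) d q) Z n)
    (g : ℝ → ℝ) (hg : ContDiff ℝ 2 g)
    (hg' : deriv g (lamE (fpoly (r 0) d q) Z) ≠ 0)
    (φ : ℕ → ℝ)
    (hφ : ∀ n : ℕ, 1 ≤ n →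
      dW (Measure.map (Fstat (fpoly (r 0) d q) Z n) (ℙ : Measure Ω)) (gaussianReal 0 1) ≤ φ n)
    (p' M : ℝ) (hp' : 1 < p') (hM : 0 < M)
    (hmom : ∀ n : ℕ, 1 ≤ n →
      (∫ ω,
          (sSup ((fun x => |deriv (deriv g) x|) ''
            Set.Icc (min (Qvar (fpoly (r 0) d q) Z n ω) (lamE (fpoly (r 0) d q) Z))
              (max (Qvar (fpoly (r 0) d q) Z n ω) (lamE (fpoly (r 0) d q) Z)))) ^ p') ≤ M) :
    ∃ C > (0 : ℝ), ∀ n : ℕ, 1 ≤ n →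
      dW
          (Measure.map
            (fun ω =>
              Real.sqrt n * (g (Qvar (fpoly (r 0) d q) Z n ω) - g (lamE (fpoly (r 0) d q) Z)) /
                (deriv g (lamE (fpoly (r 0) d q) Z) * Real.sqrt (varU (fpoly (r 0) d q) Z n)))
            (ℙ : Measure Ω))
          (gaussianReal 0 1) ≤
        C / Real.sqrt n + φ n := by
  simp only [← funext (eval_fpolyPolynomial (r 0) d q)] at hvar hg' hφ ⊢
  exact statement_14_general hZ (eval_neg_fpolyPolynomial _ d q) (by lia)
    (natDegree_fpolyPolynomial_le _ d q) (coeff_fpolyPolynomial_pos hZ.2.2.2 hqe hd) hsum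
    (hvar 1 le_rfl) hg hg' hφ

end
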